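/- Let d, N ∈ ℕ, p ∈ (1,∞), α ∈ (0,1), c₁, c₂ > 0, Q₀ ⊂ ℝ^d a cube, and let u ∈ W^{1,p}(Q₀;ℝ^N) be such that: (i) V(∇u) ∈ W^{1,2}_loc(Q₀) and ∫_Q|∇(V(∇u))|² ≤ (c₁/R²)∫_{4Q}|V(∇u)|² for every cube Q of sidelength R with 4Q ⊂ Q₀; (ii) u has a continuous representative with [u]_{C^α(Q)} ≤ c₂R^{1−α}((⨍_{2Q}|∇u|^p)^{1/p} + 1) for every cube Q of sidelength R with 3Q ⊂ Q₀. Then there is c > 0, depending only on d, N, p, α, c₁, c₂, such that (⨍_Q|∇u|^{p+2})^{1/(p+2)} ≤ c((⨍_{2Q}|∇u|^p)^{1/p} + 1) for every cube Q with 2Q ⊂ Q₀. -/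

import Mathlib

open MeasureTheory Filter Metric Set
open scoped ENNReal Topology RealInnerProductSpace

noncomputable section

/-- `ℝ^d` with the Euclidean norm. -/
abbrev Ed (d : ℕ) : Type := EuclideanSpace ℝ (Fin d)
/-- `ℝ^N` with the Euclidean norm. -/
abbrev En (N : ℕ) : Type := EuclideanSpace ℝ (Fin N)
/-- The space of `N × d` matrices with the Euclidean (Frobenius) norm. -/
abbrev Mat (N d : ℕ) : Type := EuclideanSpace ℝ (Fin N × Fin d)

/-- The open axis-parallel cube with center `c` and sidelength `R`. -/
def cube {d : ℕ} (c : Ed d) (R : ℝ) : Set (Ed d) := {x | ∀ i, |x i - c i| < R / 2}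

/-- The `i`-th partial derivative of a scalar function. -/
def pder {d : ℕ} (φ : Ed d → ℝ) (i : Fin d) (x : Ed d) : ℝ :=
  fderiv ℝ φ x (EuclideanSpace.single i 1)

/-- `g` is the weak gradient of `f` on `U`: for every smooth compactly supported scalar test
function `φ` with support in `U` and all indices `a`, `i`,
`∫_U f^a ∂_i φ = −∫_U g^a_i φ`. -/
def IsWeakGrad {d : ℕ} {ι : Type} [Fintype ι] (U : Set (Ed d))
    (f : Ed d → EuclideanSpace ℝ ι) (g : Ed d → EuclideanSpace ℝ (ι × Fin d)) : Prop :=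
  ∀ φ : Ed d → ℝ, ContDiff ℝ (⊤ : ℕ∞) φ → HasCompactSupport φ → tsupport φ ⊆ U →
    ∀ (a : ι) (i : Fin d),
      ∫ x in U, f x a * pder φ i x = - ∫ x in U, g x (a, i) * φ x

/-- The classical gradient matrix of a (smooth) vector-valued function. -/
def clGrad {d N : ℕ} (φ : Ed d → En N) (x : Ed d) : Mat N d :=
  (WithLp.equiv 2 _).symm fun q => fderiv ℝ φ x (EuclideanSpace.single q.2 1) q.1

/-- `V(η) = |η|^{(p-2)/2} η` (so that `V(0) = 0`). -/
def Vm (p : ℝ) {ι : Type} [Fintype ι] (η : EuclideanSpace ℝ ι) : EuclideanSpace ℝ ι :=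
  ‖η‖ ^ ((p - 2) / 2) • η

/-- `u` (with weak gradient `g`) is a weak solution of `div 𝒜(∇u) = 0` on `U`:
`∫_U 𝒜(∇u)·∇φ = 0` for all smooth compactly supported `φ` with support in `U`. -/
def IsWeakSol {d N : ℕ} (U : Set (Ed d)) (𝒜 : Mat N d → Mat N d)
    (g : Ed d → Mat N d) : Prop :=
  ∀ φ : Ed d → En N, ContDiff ℝ (⊤ : ℕ∞) φ → HasCompactSupport φ → tsupport φ ⊆ U →
    ∫ x in U, ⟪𝒜 (g x), clGrad φ x⟫ = 0

/-!
Write `V = V(∇u)` and `s = 1 + 2 / p`, so that `⟨∇u, V⟩ = |V|^s` and `|V|^{2s} = |∇u|^{p+2}`. Fix a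
cutoff `η` supported in a small cube of sidelength `R` around `z` and test the weak gradient of
`u - u(z)` with `η² |V|^s V`. This turns `∫ η² |V|^{2s}` into `-∫ ⟨u - u(z), div (η² |V|^s V)⟩`. The
oscillation of `u` on the cube is at most a multiple of `R`, so Young's inequality absorbs half of
`∫ η² |V|^{2s}`, and what remains is `R²` times `∫ η² |∇V|² + |∇η|² |V|²`. By the Caccioppoli
inequality this is at most a multiple of `∫ |V|² = ∫ |∇u|^p` over the larger cube, and finitely many
small balls cover `Q`.

The field `|V|^s V` is not an admissible test field, since `V` is only weakly differentiable and
`∫ η² |V|^{2s}` is not known to be finite. Therefore `V` is mollified and the power is replaced by a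
smooth bounded truncation from below; dominated convergence removes the mollification, and Fatou's
lemma the truncation.
-/

open scoped Convolution

section Mollification

variable {G F : Type*} [NormedAddCommGroup G] [NormedSpace ℝ G] [FiniteDimensional ℝ G]
  [MeasurableSpace G] [BorelSpace G] [NormedAddCommGroup F] [NormedSpace ℝ F] (μ : Measure G)

/-- The mollification of `f` by the bump function `b` normalised to have integral one. -/
def mollify (b : ContDiffBump (0 : G)) (f : G → F) : G → F :=
  b.normed μ ⋆[ContinuousLinearMap.lsmul ℝ ℝ, μ] f

lemma enorm_mollify_le (b : ContDiffBump (0 : G)) (f : G → F) (x : G) [μ.IsAddLeftInvariant]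
    [μ.IsNegInvariant] :
    ‖mollify μ b f x‖ₑ ≤ ∫⁻ y, ENNReal.ofReal (b.normed μ (x - y)) * ‖f y‖ₑ ∂μ := by
  rw [mollify, convolution_eq_swap]
  refine (enorm_integral_le_lintegral_enorm _).trans_eq (lintegral_congr fun y => ?_)
  rw [ContinuousLinearMap.lsmul_apply, enorm_smul, Real.enorm_of_nonneg (b.nonneg_normed _)]

variable [μ.IsAddHaarMeasure]

lemma lintegral_ofReal_normed (b : ContDiffBump (0 : G)) :
    ∫⁻ x, ENNReal.ofReal (b.normed μ x) ∂μ = 1 := by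
  rw [← ofReal_integral_eq_lintegral_ofReal b.integrable_normed
    (Eventually.of_forall fun x => b.nonneg_normed x), b.integral_normed, ENNReal.ofReal_one]

/-- Jensen's inequality for the probability measure with density `y ↦ b.normed μ (x - y)`. -/
lemma enorm_mollify_rpow_le (b : ContDiffBump (0 : G)) {f : G → F} (hf : AEStronglyMeasurable f μ)
    {q : ℝ} (hq : 1 ≤ q) (x : G) :
    ‖mollify μ b f x‖ₑ ^ q ≤ ∫⁻ y, ENNReal.ofReal (b.normed μ (x - y)) * ‖f y‖ₑ ^ q ∂μ := by
  have hq0 : 0 < q := by linarith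
  obtain ⟨k, hk_def⟩ : ∃ k : G → ℝ≥0∞, k = fun y => ENNReal.ofReal (b.normed μ (x - y)) := ⟨_, rfl⟩
  have hk : Measurable k := by
    have := b.continuous_normed (μ := μ)
    rw [hk_def]
    fun_prop
  have hprob : IsProbabilityMeasure (μ.withDensity k) := by
    refine ⟨?_⟩
    rw [withDensity_apply _ MeasurableSet.univ, Measure.restrict_univ, hk_def,
      lintegral_sub_left_eq_self (fun y => ENNReal.ofReal (b.normed μ y)) x,
      lintegral_ofReal_normed]
  have hfk : AEStronglyMeasurable f (μ.withDensity k) :=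
    hf.mono_ac (withDensity_absolutelyContinuous μ k)
  have h_one : ‖mollify μ b f x‖ₑ ≤ eLpNorm f 1 (μ.withDensity k) := by
    rw [eLpNorm_one_eq_lintegral_enorm, lintegral_withDensity_eq_lintegral_mul₀ hk.aemeasurable
      hf.enorm, hk_def]
    exact enorm_mollify_le μ b f x
  calc ‖mollify μ b f x‖ₑ ^ q ≤ eLpNorm f (ENNReal.ofReal q) (μ.withDensity k) ^ q := by
        gcongr
        exact h_one.trans (eLpNorm_le_eLpNorm_of_exponent_le (by simpa using hq) hfk)
    _ = ∫⁻ y, ‖f y‖ₑ ^ q ∂(μ.withDensity k) := by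
        rw [eLpNorm_eq_lintegral_rpow_enorm_toReal (by simpa using hq0) ENNReal.ofReal_ne_top,
          ENNReal.toReal_ofReal hq0.le, ← ENNReal.rpow_mul, one_div_mul_cancel hq0.ne',
          ENNReal.rpow_one]
    _ = ∫⁻ y, ENNReal.ofReal (b.normed μ (x - y)) * ‖f y‖ₑ ^ q ∂μ := by
        rw [lintegral_withDensity_eq_lintegral_mul₀ hk.aemeasurable (hf.enorm.pow_const q), hk_def]
        rfl

lemma lintegral_enorm_mollify_rpow_le (b : ContDiffBump (0 : G)) {f : G → F}
    (hf : AEStronglyMeasurable f μ) {q : ℝ} (hq : 1 ≤ q) :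
    ∫⁻ x, ‖mollify μ b f x‖ₑ ^ q ∂μ ≤ ∫⁻ x, ‖f x‖ₑ ^ q ∂μ := by
  have hb := b.continuous_normed (μ := μ)
  have hk : Measurable fun z : G × G => ENNReal.ofReal (b.normed μ (z.1 - z.2)) := by fun_prop
  calc ∫⁻ x, ‖mollify μ b f x‖ₑ ^ q ∂μ
      ≤ ∫⁻ x, ∫⁻ y, ENNReal.ofReal (b.normed μ (x - y)) * ‖f y‖ₑ ^ q ∂μ ∂μ :=
        lintegral_mono fun x => enorm_mollify_rpow_le μ b hf hq x
    _ = ∫⁻ y, ∫⁻ x, ENNReal.ofReal (b.normed μ (x - y)) * ‖f y‖ₑ ^ q ∂μ ∂μ :=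
        lintegral_lintegral_swap (hk.aemeasurable.mul (hf.enorm.comp_snd.pow_const q))
    _ = ∫⁻ y, ‖f y‖ₑ ^ q ∂μ := by
        refine lintegral_congr fun y => ?_
        have hky : Measurable fun x => ENNReal.ofReal (b.normed μ (x - y)) := by fun_prop
        rw [lintegral_mul_const _ hky,
          lintegral_sub_right_eq_self (fun x => ENNReal.ofReal (b.normed μ x)) y,
          lintegral_ofReal_normed, one_mul]

variable {μ}

lemma mollify_apply (b : ContDiffBump (0 : G)) (f : G → F) (x : G) :
    mollify μ b f x = ∫ y, b.normed μ (x - y) • f y ∂μ :=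
  convolution_eq_swap _

lemma integrable_normed_sub_smul (b : ContDiffBump (0 : G)) {f : G → F}
    (hf : LocallyIntegrable f μ) (x : G) : Integrable (fun y => b.normed μ (x - y) • f y) μ :=
  (b.hasCompactSupport_normed.convolutionExists_left (ContinuousLinearMap.lsmul ℝ ℝ)
    b.continuous_normed hf x).integrable_swap

lemma integrable_fderiv_normed_sub_smul (b : ContDiffBump (0 : G)) {f : G → F}
    (hf : LocallyIntegrable f μ) (x e : G) :
    Integrable (fun y => fderiv ℝ (b.normed μ) (x - y) e • f y) μ :=
  ((b.hasCompactSupport_normed.fderiv_apply ℝ e).convolutionExists_left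
    (ContinuousLinearMap.lsmul ℝ ℝ)
    (((b.contDiff_normed (n := 1)).continuous_fderiv (by simp)).clm_apply continuous_const)
    hf x).integrable_swap

lemma fderiv_mollify_apply (b : ContDiffBump (0 : G)) {f : G → F} (hf : LocallyIntegrable f μ)
    (x e : G) :
    fderiv ℝ (mollify μ b f) x e = ∫ y, fderiv ℝ (b.normed μ) (x - y) e • f y ∂μ := by
  have h_deriv := (b.hasCompactSupport_normed (μ := μ)).hasFDerivAt_convolution_left
    (ContinuousLinearMap.lsmul ℝ ℝ) b.contDiff_normed hf x
  have h_int := ((b.hasCompactSupport_normed.fderiv ℝ).convolutionExists_left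
    ((ContinuousLinearMap.lsmul ℝ ℝ).precompL G)
    ((b.contDiff_normed (μ := μ) (n := 1)).continuous_fderiv (by simp)) hf x).integrable_swap
  rw [mollify, h_deriv.fderiv, convolution_eq_swap, ContinuousLinearMap.integral_apply h_int]
  rfl

lemma contDiff_mollify [CompleteSpace F] (b : ContDiffBump (0 : G)) {f : G → F}
    (hf : LocallyIntegrable f μ) : ContDiff ℝ (⊤ : ℕ∞) (mollify μ b f) :=
  b.hasCompactSupport_normed.contDiff_convolution_left _ b.contDiff_normed hf

lemma setIntegral_norm_mollify_sq_le (b : ContDiffBump (0 : G)) {f : G → F} (hf : MemLp f 2 μ)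
    (K : Set G) : ∫ x in K, ‖mollify μ b f x‖ ^ 2 ∂μ ≤ ∫ x, ‖f x‖ ^ 2 ∂μ := by
  have h_cont : Continuous (mollify μ b f) :=
    b.hasCompactSupport_normed.continuous_convolution_left _ b.continuous_normed
      (hf.locallyIntegrable (by norm_num))
  have h_lint : ∫⁻ x, ‖mollify μ b f x‖ₑ ^ (2 : ℝ) ∂μ ≤ ∫⁻ x, ‖f x‖ₑ ^ (2 : ℝ) ∂μ :=
    lintegral_enorm_mollify_rpow_le μ b hf.1 one_le_two
  have h_fin : ∫⁻ x, ‖f x‖ₑ ^ (2 : ℝ) ∂μ < ∞ := by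
    simpa using lintegral_rpow_enorm_lt_top_of_eLpNorm_lt_top (by simp) (by simp) hf.2
  have h_mem : MemLp (mollify μ b f) 2 μ := by
    refine ⟨h_cont.aestronglyMeasurable, ?_⟩
    rw [eLpNorm_lt_top_iff_lintegral_rpow_enorm_lt_top (by simp) (by simp)]
    simpa using h_lint.trans_lt h_fin
  have h_int {h : G → F} (hh : MemLp h 2 μ) :
      ∫ x, ‖h x‖ ^ 2 ∂μ = (∫⁻ x, ‖h x‖ₑ ^ (2 : ℝ) ∂μ).toReal := by
    rw [integral_eq_lintegral_of_nonneg_ae (Eventually.of_forall fun x => by positivity)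
      (show AEStronglyMeasurable (fun x => ‖h x‖ ^ 2) μ from hh.1.norm.pow 2)]
    congr with x
    simp [ENNReal.ofReal_pow]
  calc ∫ x in K, ‖mollify μ b f x‖ ^ 2 ∂μ ≤ ∫ x, ‖mollify μ b f x‖ ^ 2 ∂μ :=
        setIntegral_le_integral (by simpa using h_mem.integrable_norm_pow (by simp))
          (Eventually.of_forall fun x => by positivity)
    _ ≤ ∫ x, ‖f x‖ ^ 2 ∂μ := by
        rw [h_int h_mem, h_int hf]
        exact ENNReal.toReal_mono h_fin.ne h_lint

lemma exists_ae_tendsto_mollify [CompleteSpace F] {f : G → F} (hf : LocallyIntegrable f μ) :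
    ∃ b : ℕ → ContDiffBump (0 : G), Tendsto (fun k => (b k).rOut) atTop (𝓝 0) ∧
      ∀ᵐ x ∂μ, Tendsto (fun k => mollify μ (b k) f x) atTop (𝓝 (f x)) := by
  let b (k : ℕ) : ContDiffBump (0 : G) :=
    ⟨1 / (k + 1), 2 * (1 / (k + 1)), by positivity, lt_two_mul_self (by positivity)⟩
  have hb : Tendsto (fun k => (b k).rOut) atTop (𝓝 0) := by
    simpa [b] using (tendsto_one_div_add_atTop_nhds_zero_nat (𝕜 := ℝ)).const_mul 2
  exact ⟨b, hb, ContDiffBump.ae_convolution_tendsto_right_of_locallyIntegrable (K := 2) hb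
    (Eventually.of_forall fun k => le_rfl) hf⟩

end Mollification

section WeakGradient

variable {d : ℕ} {ι : Type} [Fintype ι] {U : Set (Ed d)} {f : Ed d → EuclideanSpace ℝ ι}
  {g : Ed d → EuclideanSpace ℝ (ι × Fin d)}

lemma fderiv_eq_zero_of_notMem_tsupport {E F : Type*} [NormedAddCommGroup E] [NormedSpace ℝ E]
    [NormedAddCommGroup F] [NormedSpace ℝ F] {φ : E → F} {x : E} (hx : x ∉ tsupport φ) :
    fderiv ℝ φ x = 0 :=
  image_eq_zero_of_notMem_tsupport fun h => hx (tsupport_fderiv_subset ℝ h)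

lemma continuous_pder {φ : Ed d → ℝ} (hφ : ContDiff ℝ (⊤ : ℕ∞) φ) (i : Fin d) :
    Continuous (pder φ i) :=
  (hφ.continuous_fderiv (by simp)).clm_apply continuous_const

lemma hasCompactSupport_pder {φ : Ed d → ℝ} (hφ : HasCompactSupport φ) (i : Fin d) :
    HasCompactSupport (pder φ i) :=
  hφ.fderiv_apply ℝ _

lemma integral_pder_eq_zero {φ : Ed d → ℝ} (hφ : ContDiff ℝ (⊤ : ℕ∞) φ)
    (hφc : HasCompactSupport φ) (i : Fin d) : ∫ x, pder φ i x = 0 := by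
  have h_int : Integrable fun x => fderiv ℝ φ x (EuclideanSpace.single i 1) :=
    (continuous_pder hφ i).integrable_of_hasCompactSupport (hasCompactSupport_pder hφc i)
  have h_parts := integral_mul_fderiv_eq_neg_fderiv_mul_of_integrable
    (μ := (volume : Measure (Ed d))) (f := fun _ => (1 : ℝ)) (g := φ)
    (v := EuclideanSpace.single i 1) (by simp)
    (by simpa only [one_mul] using h_int)
    (by simpa using hφ.continuous.integrable_of_hasCompactSupport hφc)
    (fun x _ => differentiableAt_const _) (fun x _ => hφ.differentiable (by simp) x)
  simpa [pder] using h_parts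

lemma isWeakGrad_iff_integral :
    IsWeakGrad U f g ↔ ∀ φ : Ed d → ℝ, ContDiff ℝ (⊤ : ℕ∞) φ → HasCompactSupport φ →
      tsupport φ ⊆ U → ∀ (a : ι) (i : Fin d),
        ∫ x, f x a * pder φ i x = - ∫ x, g x (a, i) * φ x := by
  refine forall_congr' fun φ => forall₃_congr fun _ _ hφU => forall₂_congr fun a i => ?_
  rw [setIntegral_eq_integral_of_forall_compl_eq_zero fun x hx => ?_,
    setIntegral_eq_integral_of_forall_compl_eq_zero fun x hx => ?_]
  · rw [image_eq_zero_of_notMem_tsupport fun h => hx (hφU h), mul_zero]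
  · rw [pder, fderiv_eq_zero_of_notMem_tsupport fun h => hx (hφU h), zero_apply, mul_zero]

lemma IsWeakGrad.mono {S : Set (Ed d)} (h : IsWeakGrad U f g) (hSU : S ⊆ U) :
    IsWeakGrad S f g :=
  isWeakGrad_iff_integral.2 fun φ hφ hφc hφS =>
    isWeakGrad_iff_integral.1 h φ hφ hφc (hφS.trans hSU)

lemma IsWeakGrad.congr_ae {f' : Ed d → EuclideanSpace ℝ ι} (h : IsWeakGrad U f g)
    (hff' : f =ᵐ[volume.restrict U] f') : IsWeakGrad U f' g := by
  intro φ hφ hφc hφU a i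
  rw [← h φ hφ hφc hφU a i]
  refine integral_congr_ae ?_
  filter_upwards [hff'] with x hx
  rw [hx]

lemma integrable_apply_mul_of_tsupport_subset {κ : Type*} [Fintype κ]
    {h : Ed d → EuclideanSpace ℝ κ} (hh : LocallyIntegrableOn h U) {ψ : Ed d → ℝ}
    (hψ : Continuous ψ) (hψc : HasCompactSupport ψ) (hψU : tsupport ψ ⊆ U) (q : κ) :
    Integrable fun x => h x q * ψ x := by
  obtain ⟨C, hC⟩ := hψ.bounded_above_of_compact_support hψc
  have h_supp : Function.support (fun x => h x q * ψ x) ⊆ tsupport ψ :=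
    (Function.support_mul_subset_right _ _).trans (subset_tsupport ψ)
  have h_coord : IntegrableOn (fun x => h x q) (tsupport ψ) :=
    (EuclideanSpace.proj q : EuclideanSpace ℝ κ →L[ℝ] ℝ).integrable_comp
      (hh.integrableOn_compact_subset hψU hψc)
  exact (integrableOn_iff_integrable_of_support_subset h_supp).1
    (h_coord.mul_bdd hψ.aestronglyMeasurable (Eventually.of_forall hC))

lemma tsupport_pder_subset (φ : Ed d → ℝ) (i : Fin d) : tsupport (pder φ i) ⊆ tsupport φ :=
  tsupport_fderiv_apply_subset ℝ _

lemma IsWeakGrad.sub_const (h : IsWeakGrad U f g) (hf : LocallyIntegrableOn f U)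
    (c : EuclideanSpace ℝ ι) : IsWeakGrad U (fun x => f x - c) g := by
  refine isWeakGrad_iff_integral.2 fun φ hφ hφc hφU a i => ?_
  have h_cont := continuous_pder hφ i
  have h_comp := hasCompactSupport_pder hφc i
  simp only [PiLp.sub_apply, sub_mul]
  rw [integral_sub (integrable_apply_mul_of_tsupport_subset hf h_cont h_comp
    ((tsupport_pder_subset φ i).trans hφU) a)
    ((h_cont.integrable_of_hasCompactSupport h_comp).const_mul _), integral_const_mul,
    integral_pder_eq_zero hφ hφc, mul_zero, sub_zero, isWeakGrad_iff_integral.1 h φ hφ hφc hφU]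

/-- The row-wise divergence of a matrix field. -/
def rowDiv (Φ : Ed d → EuclideanSpace ℝ (ι × Fin d)) (x : Ed d) : EuclideanSpace ℝ ι :=
  WithLp.toLp 2 fun a => ∑ i, fderiv ℝ Φ x (EuclideanSpace.single i 1) (a, i)

lemma norm_rowDiv_le (Φ : Ed d → EuclideanSpace ℝ (ι × Fin d)) (x : Ed d) :
    ‖rowDiv Φ x‖ ≤ ∑ i, ‖fderiv ℝ Φ x (EuclideanSpace.single i 1)‖ := by
  have h_sum : rowDiv Φ x = ∑ i, (WithLp.toLp 2 fun a =>
      fderiv ℝ Φ x (EuclideanSpace.single i 1) (a, i) : EuclideanSpace ℝ ι) := by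
    ext a
    simp [rowDiv]
  rw [h_sum]
  refine (norm_sum_le _ _).trans (Finset.sum_le_sum fun i _ => ?_)
  rw [EuclideanSpace.norm_eq, EuclideanSpace.norm_eq, Fintype.sum_prod_type]
  gcongr with a
  exact Finset.single_le_sum (f := fun j => ‖fderiv ℝ Φ x (EuclideanSpace.single i 1) (a, j)‖ ^ 2)
    (fun j _ => by positivity) (Finset.mem_univ i)

lemma pder_apply {κ : Type*} [Finite κ] {Φ : Ed d → EuclideanSpace ℝ κ} {x : Ed d}
    (hΦ : DifferentiableAt ℝ Φ x) (i : Fin d) (q : κ) :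
    pder (fun y => Φ y q) i x = fderiv ℝ Φ x (EuclideanSpace.single i 1) q := by
  have := Fintype.ofFinite κ
  have h := (EuclideanSpace.proj q : EuclideanSpace ℝ κ →L[ℝ] ℝ).hasFDerivAt.comp x hΦ.hasFDerivAt
  exact congrArg (fun A : Ed d →L[ℝ] ℝ => A (EuclideanSpace.single i 1)) h.fderiv

variable {Φ : Ed d → EuclideanSpace ℝ (ι × Fin d)}

lemma IsWeakGrad.integral_inner_eq (h : IsWeakGrad U f g) (hf : LocallyIntegrableOn f U)
    (hg : LocallyIntegrableOn g U) (hΦ : ContDiff ℝ (⊤ : ℕ∞) Φ) (hΦc : HasCompactSupport Φ)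
    (hΦU : tsupport Φ ⊆ U) : ∫ x, ⟪g x, Φ x⟫ = - ∫ x, ⟪f x, rowDiv Φ x⟫ := by
  have h_smooth (q) : ContDiff ℝ (⊤ : ℕ∞) fun x => Φ x q :=
    (EuclideanSpace.proj q : EuclideanSpace ℝ (ι × Fin d) →L[ℝ] ℝ).contDiff.comp hΦ
  have h_supp (q) : tsupport (fun x => Φ x q) ⊆ tsupport Φ :=
    closure_mono fun x hx hΦx => hx (by simp [hΦx])
  have h_comp (q) : HasCompactSupport fun x => Φ x q :=
    hΦc.of_isClosed_subset (isClosed_tsupport _) (h_supp q)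
  have h_left : ∫ x, ⟪g x, Φ x⟫ = ∑ q, ∫ x, g x q * Φ x q := by
    rw [← integral_finsetSum _ fun q _ => integrable_apply_mul_of_tsupport_subset hg
      (h_smooth q).continuous (h_comp q) ((h_supp q).trans hΦU) q]
    simp only [PiLp.inner_apply, Real.inner_apply]
  have h_right : ∫ x, ⟪f x, rowDiv Φ x⟫ =
      ∑ q : ι × Fin d, ∫ x, f x q.1 * pder (fun x => Φ x q) q.2 x := by
    rw [← integral_finsetSum _ fun q _ => integrable_apply_mul_of_tsupport_subset hf
      (continuous_pder (h_smooth q) q.2) (hasCompactSupport_pder (h_comp q) q.2)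
      ((tsupport_pder_subset _ _).trans ((h_supp q).trans hΦU)) q.1]
    simp only [PiLp.inner_apply, Real.inner_apply, Fintype.sum_prod_type, rowDiv, Finset.mul_sum,
      pder_apply (hΦ.differentiable (by simp) _)]
  rw [h_left, h_right, ← Finset.sum_neg_distrib]
  refine Finset.sum_congr rfl fun q _ => ?_
  rw [isWeakGrad_iff_integral.1 h _ (h_smooth q) (h_comp q) ((h_supp q).trans hΦU) q.1 q.2,
    neg_neg]

lemma IsWeakGrad.integral_inner_le_of_norm_sub_le (h : IsWeakGrad U f g)
    (hf : LocallyIntegrableOn f U) (hg : LocallyIntegrableOn g U)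
    (hΦ : ContDiff ℝ (⊤ : ℕ∞) Φ) (hΦc : HasCompactSupport Φ) (hΦU : tsupport Φ ⊆ U)
    {ω : ℝ} {c : EuclideanSpace ℝ ι} (hω : ∀ x ∈ U, ‖f x - c‖ ≤ ω) :
    ∫ x, ⟪g x, Φ x⟫ ≤ ∫ x, ω * ∑ i, ‖fderiv ℝ Φ x (EuclideanSpace.single i 1)‖ := by
  have h_int (i) : Integrable fun x => ‖fderiv ℝ Φ x (EuclideanSpace.single i 1)‖ :=
    (((hΦ.continuous_fderiv (by simp)).clm_apply continuous_const).integrable_of_hasCompactSupport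
      (hΦc.fderiv_apply ℝ _)).norm
  rw [(h.sub_const hf c).integral_inner_eq (hf.sub (locallyIntegrableOn_const c)) hg hΦ hΦc hΦU]
  refine (neg_le_abs _).trans ?_
  rw [← Real.norm_eq_abs]
  refine norm_integral_le_of_norm_le ((integrable_finsetSum _ fun i _ => h_int i).const_mul ω)
    (Eventually.of_forall fun x => ?_)
  by_cases hx : x ∈ U
  · exact (norm_inner_le_norm _ _).trans
      (mul_le_mul (hω x hx) (norm_rowDiv_le Φ x) (norm_nonneg _) ((norm_nonneg _).trans (hω x hx)))
  · have h_zero := norm_rowDiv_le Φ x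
    rw [fderiv_eq_zero_of_notMem_tsupport fun hxΦ => hx (hΦU hxΦ)] at h_zero ⊢
    simp only [zero_apply, norm_zero, Finset.sum_const_zero, norm_le_zero_iff] at h_zero
    simp [h_zero]

lemma pder_comp_const_sub {φ : Ed d → ℝ} (hφ : Differentiable ℝ φ) (x y : Ed d) (i : Fin d) :
    pder (fun z => φ (x - z)) i y = - pder φ i (x - y) := by
  have h := (hφ (x - y)).hasFDerivAt.comp y ((hasFDerivAt_id y).const_sub x)
  have h_eq : fderiv ℝ (fun z => φ (x - z)) y = _ := h.fderiv
  simp [pder, h_eq]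

lemma IsWeakGrad.fderiv_mollify_eq (h : IsWeakGrad U f g) (hU : MeasurableSet U)
    (hf : LocallyIntegrable (U.indicator f)) (hg : LocallyIntegrable (U.indicator g))
    (b : ContDiffBump (0 : Ed d)) {x : Ed d} (hx : closedBall x b.rOut ⊆ U) (a : ι) (i : Fin d) :
    fderiv ℝ (mollify volume b (U.indicator f)) x (EuclideanSpace.single i 1) a =
      mollify volume b (U.indicator g) x (a, i) := by
  set ρ := b.normed (volume : Measure (Ed d))
  have h_supp : tsupport (fun y => ρ (x - y)) ⊆ U := by
    refine (closure_minimal (fun y hy => ?_) isClosed_closedBall).trans hx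
    have hy' : x - y ∈ Function.support ρ := hy
    rw [b.support_normed_eq, mem_ball_zero_iff, ← dist_eq_norm] at hy'
    exact mem_closedBall'.2 hy'.le
  have h_weak := h (fun y => ρ (x - y)) (b.contDiff_normed.comp (contDiff_const.sub contDiff_id))
    (b.hasCompactSupport_normed.comp_homeomorph (Homeomorph.subLeft x)) h_supp a i
  have h_diff : Differentiable ℝ ρ := (b.contDiff_normed (n := 1)).differentiable (by simp)
  have h_left (y : Ed d) : (fderiv ℝ ρ (x - y) (EuclideanSpace.single i 1) • U.indicator f y) a =
      U.indicator (fun y => -(f y a * pder (fun z => ρ (x - z)) i y)) y := by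
    simp only [pder_comp_const_sub h_diff]
    by_cases hy : y ∈ U <;> simp [hy, pder, mul_comm]
  have h_right (y : Ed d) : (ρ (x - y) • U.indicator g y) (a, i) =
      U.indicator (fun y => g y (a, i) * ρ (x - y)) y := by
    by_cases hy : y ∈ U <;> simp [hy, mul_comm]
  rw [fderiv_mollify_apply b hf, mollify_apply,
    eval_integral_piLp (integrable_fderiv_normed_sub_smul b hf x _).eval_piLp,
    eval_integral_piLp (integrable_normed_sub_smul b hg x).eval_piLp,
    integral_congr_ae (Eventually.of_forall h_left),
    integral_congr_ae (Eventually.of_forall h_right), integral_indicator hU, integral_indicator hU,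
    integral_neg, h_weak, neg_neg]

lemma IsWeakGrad.sum_norm_fderiv_mollify_sq (h : IsWeakGrad U f g) (hU : MeasurableSet U)
    (hf : LocallyIntegrable (U.indicator f)) (hg : LocallyIntegrable (U.indicator g))
    (b : ContDiffBump (0 : Ed d)) {x : Ed d} (hx : closedBall x b.rOut ⊆ U) :
    ∑ i, ‖fderiv ℝ (mollify volume b (U.indicator f)) x (EuclideanSpace.single i 1)‖ ^ 2 =
      ‖mollify volume b (U.indicator g) x‖ ^ 2 := by
  simp only [EuclideanSpace.norm_sq_eq, h.fderiv_mollify_eq hU hf hg b hx]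
  rw [Fintype.sum_prod_type_right]

end WeakGradient

section TruncatedPower

/-- A smooth bounded approximation of `t ↦ t ^ (s / 2)` on `[0, ∞)`, recovered as `δ → 0`. The
shift by `δ` removes the singularity of the power at the origin and the last factor its growth at
infinity. -/
def truncPow (s δ t : ℝ) : ℝ := t ^ 2 * (t + δ) ^ (s / 2 - 2) * ((1 + δ * t) ^ 3)⁻¹

variable {s δ t : ℝ}

lemma contDiffAt_truncPow (hδ : 0 < δ) (ht : 0 ≤ t) :
    ContDiffAt ℝ (⊤ : ℕ∞) (truncPow s δ) t := by
  unfold truncPow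
  refine ContDiffAt.mul (ContDiffAt.mul (by fun_prop) ?_)
    (ContDiffAt.inv (by fun_prop) (by positivity))
  exact ContDiffAt.rpow_const_of_ne (by fun_prop) (by positivity)

lemma truncPow_nonneg (hδ : 0 < δ) (ht : 0 ≤ t) : 0 ≤ truncPow s δ t := by
  unfold truncPow
  positivity

lemma mul_deriv_truncPow (hδ : 0 < δ) (ht : 0 ≤ t) :
    t * deriv (truncPow s δ) t = truncPow s δ t *
      (2 + (s / 2 - 2) * (t / (t + δ)) - 3 * (δ * t / (1 + δ * t))) := by
  have h_shift : t + δ ≠ 0 := by positivity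
  have h_damp : 1 + δ * t ≠ 0 := by positivity
  have h_sq : HasDerivAt (fun t : ℝ => t ^ 2) (2 * t) t := by simpa using hasDerivAt_pow 2 t
  have h_rpow : HasDerivAt (fun t => (t + δ) ^ (s / 2 - 2))
      ((s / 2 - 2) * (t + δ) ^ (s / 2 - 2 - 1)) t := by
    simpa using ((hasDerivAt_id t).add_const δ).rpow_const (p := s / 2 - 2) (Or.inl h_shift)
  have h_cube : HasDerivAt (fun t => (1 + δ * t) ^ 3) (3 * (1 + δ * t) ^ 2 * δ) t := by
    simpa using (((hasDerivAt_id t).const_mul δ).const_add 1).fun_pow 3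
  have h_deriv : deriv (truncPow s δ) t = _ :=
    ((h_sq.mul h_rpow).mul (h_cube.fun_inv (pow_ne_zero 3 h_damp))).deriv
  rw [h_deriv, Real.rpow_sub_one h_shift, Pi.mul_apply, truncPow]
  field_simp
  ring

lemma abs_mul_deriv_truncPow_le (hs : s ∈ Icc 0 6) (hδ : 0 < δ) (ht : 0 ≤ t) :
    |t * deriv (truncPow s δ) t| ≤ 3 * truncPow s δ t := by
  have h_shift : t / (t + δ) ∈ Icc (0 : ℝ) 1 :=
    ⟨by positivity, (div_le_one (by positivity)).2 (by linarith)⟩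
  have h_damp : δ * t / (1 + δ * t) ∈ Icc (0 : ℝ) 1 :=
    ⟨by positivity, (div_le_one (by positivity)).2 (by linarith)⟩
  rw [mul_deriv_truncPow hδ ht, abs_mul, abs_of_nonneg (truncPow_nonneg hδ ht), mul_comm]
  refine mul_le_mul_of_nonneg_right ?_ (truncPow_nonneg hδ ht)
  rw [abs_le]
  constructor <;> nlinarith [h_shift.1, h_shift.2, h_damp.1, h_damp.2, hs.1, hs.2]

lemma truncPow_le (hs : s ≤ 4) (hδ : 0 < δ) (ht : 0 ≤ t) :
    truncPow s δ t ≤ t ^ (s / 2) * ((1 + δ * t) ^ 3)⁻¹ := by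
  rw [truncPow]
  gcongr
  rcases ht.eq_or_lt with rfl | ht_pos
  · rw [zero_pow two_ne_zero, zero_mul]
    positivity
  calc t ^ 2 * (t + δ) ^ (s / 2 - 2) ≤ t ^ 2 * t ^ (s / 2 - 2) :=
        mul_le_mul_of_nonneg_left
          (Real.rpow_le_rpow_of_nonpos ht_pos (by linarith) (by linarith)) (by positivity)
    _ = t ^ (s / 2) := by
        rw [← Real.rpow_natCast, ← Real.rpow_add ht_pos, Nat.cast_ofNat, add_sub_cancel]

lemma rpow_le_one_add_cube {a : ℝ} (ha : a ∈ Icc 0 3) (ht : 0 ≤ t) : t ^ a ≤ 1 + t ^ 3 := by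
  rcases le_total t 1 with h_le | h_ge
  · linarith [Real.rpow_le_one ht h_le ha.1, pow_nonneg ht 3]
  · have := Real.rpow_le_rpow_of_exponent_le h_ge ha.2
    norm_cast at this
    linarith

lemma truncPow_mul_rpow_le {a : ℝ} (hs : s ∈ Icc 0 4) (ha : 0 ≤ a) (hsa : s + a ≤ 6) (hδ : 0 < δ)
    (ht : 0 ≤ t) : truncPow s δ t * t ^ (a / 2) ≤ 1 + (δ ^ 3)⁻¹ := by
  calc truncPow s δ t * t ^ (a / 2) ≤ t ^ (s / 2) * ((1 + δ * t) ^ 3)⁻¹ * t ^ (a / 2) := by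
        gcongr
        exact truncPow_le hs.2 hδ ht
    _ = t ^ (s / 2 + a / 2) * ((1 + δ * t) ^ 3)⁻¹ := by
        rw [Real.rpow_add_of_nonneg ht (by linarith [hs.1]) (by linarith)]
        ring
    _ ≤ (1 + t ^ 3) * ((1 + δ * t) ^ 3)⁻¹ := by
        gcongr
        exact rpow_le_one_add_cube ⟨by linarith [hs.1], by linarith⟩ ht
    _ ≤ 1 + (δ ^ 3)⁻¹ := by
        have h_bound : 1 + (δ * t) ^ 3 ≤ (1 + δ * t) ^ 3 := by
          nlinarith [mul_nonneg hδ.le ht, sq_nonneg (δ * t)]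
        rw [← div_eq_mul_inv, div_le_iff₀ (by positivity)]
        calc 1 + t ^ 3 ≤ 1 * 1 + (δ ^ 3)⁻¹ * (1 + (δ * t) ^ 3) := by
              rw [mul_pow, mul_add, inv_mul_cancel_left₀ (by positivity)]
              linarith [show 0 ≤ (δ ^ 3)⁻¹ * 1 by positivity]
          _ ≤ 1 * (1 + δ * t) ^ 3 + (δ ^ 3)⁻¹ * (1 + δ * t) ^ 3 := by
              gcongr
              exact (le_add_of_nonneg_right (by positivity)).trans h_bound
          _ = (1 + (δ ^ 3)⁻¹) * (1 + δ * t) ^ 3 := by ring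

lemma tendsto_truncPow (hs : 0 < s) (ht : 0 ≤ t) :
    Tendsto (fun δ => truncPow s δ t) (𝓝 0) (𝓝 (t ^ (s / 2))) := by
  rcases ht.eq_or_lt with rfl | ht_pos
  · simp [truncPow, Real.zero_rpow (half_pos hs).ne']
  have h_cont : ContinuousAt (fun δ => truncPow s δ t) 0 := by
    have h_shift : ContinuousAt (fun δ => t + δ) 0 := by fun_prop
    exact (continuousAt_const.mul (h_shift.rpow_const (Or.inl (by simpa using ht_pos.ne')))).mul
      (ContinuousAt.inv₀ (by fun_prop) (by simp))
  convert h_cont.tendsto using 2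
  rw [truncPow, add_zero, zero_mul, add_zero, one_pow, inv_one, mul_one, ← Real.rpow_natCast,
    ← Real.rpow_add ht_pos, Nat.cast_ofNat, add_sub_cancel]

variable {E : Type*} [NormedAddCommGroup E]

lemma norm_sq_rpow_half (y : E) (a : ℝ) : (‖y‖ ^ 2) ^ (a / 2) = ‖y‖ ^ a := by
  rw [← Real.rpow_natCast_mul (norm_nonneg y), Nat.cast_ofNat, mul_div_cancel₀ _ two_ne_zero]

lemma tendsto_mul_truncPow_norm_sq (hs : 0 < s) (a : ℝ) (y : E) :
    Tendsto (fun δ => a * (truncPow s δ (‖y‖ ^ 2) * ‖y‖ ^ s)) (𝓝 0)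
      (𝓝 (a * ‖y‖ ^ (2 * s))) := by
  rw [two_mul, Real.rpow_add_of_nonneg (norm_nonneg y) hs.le hs.le]
  simpa only [norm_sq_rpow_half] using
    ((tendsto_truncPow hs (sq_nonneg ‖y‖)).mul_const (‖y‖ ^ s)).const_mul a

variable [InnerProductSpace ℝ E]

/-- The function `Ψ` is a smooth substitute for the power `‖y‖ ^ s` that lies below it, whose
vector field `y ↦ Ψ y • y` has derivative controlled by `Ψ` itself, and for which `Ψ y * ‖y‖` and
`Ψ y * ‖y‖ ^ s` are bounded by `M`. -/
structure IsTruncatedPower (s M : ℝ) (Ψ : E → ℝ) : Prop where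
  contDiff : ContDiff ℝ (⊤ : ℕ∞) Ψ
  nonneg : ∀ y, 0 ≤ Ψ y
  le_norm_rpow : ∀ y, Ψ y ≤ ‖y‖ ^ s
  norm_fderiv_smul_le : ∀ y w, ‖fderiv ℝ (fun z => Ψ z • z) y w‖ ≤ 7 * Ψ y * ‖w‖
  mul_norm_rpow_le : ∀ y, Ψ y * ‖y‖ ^ s ≤ M
  mul_norm_le : ∀ y, Ψ y * ‖y‖ ≤ M

lemma norm_fderiv_truncPow_norm_sq_smul_le (hs : s ∈ Icc 0 6) (hδ : 0 < δ) (y w : E) :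
    ‖fderiv ℝ (fun z => truncPow s δ (‖z‖ ^ 2) • z) y w‖ ≤
      7 * truncPow s δ (‖y‖ ^ 2) * ‖w‖ := by
  set ψ := truncPow s δ (‖y‖ ^ 2)
  set ψ' := deriv (truncPow s δ) (‖y‖ ^ 2)
  have hψ : 0 ≤ ψ := truncPow_nonneg hδ (sq_nonneg _)
  have h_profile : HasDerivAt (truncPow s δ) ψ' (‖y‖ ^ 2) :=
    ((contDiffAt_truncPow hδ (sq_nonneg _)).differentiableAt (by simp)).hasDerivAt
  have h_deriv : HasFDerivAt (fun z : E => truncPow s δ (‖z‖ ^ 2)) (ψ' • 2 • innerSL ℝ y) y :=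
    (h_profile.comp_hasFDerivAt y (hasStrictFDerivAt_norm_sq y).hasFDerivAt :)
  have h_fderiv : fderiv ℝ (fun z => truncPow s δ (‖z‖ ^ 2) • z) y w =
      ψ • w + (ψ' * (2 * ⟪y, w⟫)) • y := by
    have h_smul : fderiv ℝ (fun z => truncPow s δ (‖z‖ ^ 2) • z) y = _ :=
      (h_deriv.smul (hasFDerivAt_id y)).fderiv
    simp [h_smul, ψ]
  have h_log : ‖y‖ ^ 2 * |ψ'| ≤ 3 * ψ := by
    simpa [abs_mul] using abs_mul_deriv_truncPow_le hs hδ (sq_nonneg ‖y‖)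
  calc ‖fderiv ℝ (fun z => truncPow s δ (‖z‖ ^ 2) • z) y w‖
      ≤ ψ * ‖w‖ + |ψ'| * (2 * |⟪y, w⟫|) * ‖y‖ := by
        rw [h_fderiv]
        refine (norm_add_le _ _).trans_eq ?_
        simp [norm_smul, abs_of_nonneg hψ]
    _ ≤ ψ * ‖w‖ + |ψ'| * (2 * (‖y‖ * ‖w‖)) * ‖y‖ := by
        gcongr
        exact abs_real_inner_le_norm y w
    _ = ψ * ‖w‖ + 2 * (‖y‖ ^ 2 * |ψ'|) * ‖w‖ := by ring
    _ ≤ ψ * ‖w‖ + 2 * (3 * ψ) * ‖w‖ := by gcongr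
    _ = 7 * ψ * ‖w‖ := by ring

lemma isTruncatedPower_truncPow (hs : s ∈ Icc 0 3) (hδ : 0 < δ) :
    IsTruncatedPower s (1 + (δ ^ 3)⁻¹) fun y : E => truncPow s δ (‖y‖ ^ 2) where
  contDiff := contDiff_iff_contDiffAt.2 fun y =>
    (contDiffAt_truncPow hδ (sq_nonneg _)).comp y (contDiff_norm_sq ℝ).contDiffAt
  nonneg y := truncPow_nonneg hδ (sq_nonneg _)
  le_norm_rpow y := by
    refine (truncPow_le (by linarith [hs.2]) hδ (sq_nonneg _)).trans ?_
    rw [norm_sq_rpow_half]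
    refine mul_le_of_le_one_right (by positivity) (inv_le_one_of_one_le₀ (one_le_pow₀ ?_))
    exact le_add_of_nonneg_right (by positivity)
  norm_fderiv_smul_le := norm_fderiv_truncPow_norm_sq_smul_le ⟨hs.1, by linarith [hs.2]⟩ hδ
  mul_norm_rpow_le y := by
    rw [← norm_sq_rpow_half y s]
    exact truncPow_mul_rpow_le ⟨hs.1, by linarith [hs.2]⟩ hs.1 (by linarith [hs.2]) hδ
      (sq_nonneg _)
  mul_norm_le y := by
    have := truncPow_mul_rpow_le (a := 1) ⟨hs.1, by linarith [hs.2]⟩ one_pos.le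
      (by linarith [hs.2]) hδ (sq_nonneg ‖y‖)
    rwa [norm_sq_rpow_half, Real.rpow_one] at this

end TruncatedPower

section Cutoff

/-- A smooth compactly supported cutoff function with gradient at most `L`. -/
structure IsCutoff {E : Type*} [NormedAddCommGroup E] [NormedSpace ℝ E] (L : ℝ) (η : E → ℝ) :
    Prop where
  contDiff : ContDiff ℝ (⊤ : ℕ∞) η
  hasCompactSupport : HasCompactSupport η
  nonneg : ∀ x, 0 ≤ η x
  le_one : ∀ x, η x ≤ 1
  norm_fderiv_le : ∀ x, ‖fderiv ℝ η x‖ ≤ L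

lemma norm_inv_smul_sub_le_iff {E : Type*} [NormedAddCommGroup E] [NormedSpace ℝ E] {x₀ x : E}
    {r a : ℝ} (hr : 0 < r) : ‖r⁻¹ • (x - x₀)‖ ≤ a ↔ x ∈ closedBall x₀ (a * r) := by
  rw [mem_closedBall, dist_eq_norm, norm_smul, norm_inv, Real.norm_of_nonneg hr.le,
    inv_mul_le_iff₀ hr, mul_comm]

lemma exists_isCutoff (E : Type*) [NormedAddCommGroup E] [NormedSpace ℝ E]
    [FiniteDimensional ℝ E] :
    ∃ L : ℝ, ∀ (x₀ : E) (r : ℝ), 0 < r → ∃ η : E → ℝ, IsCutoff (L / r) η ∧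
      tsupport η ⊆ closedBall x₀ (2 * r) ∧ ∀ x ∈ closedBall x₀ r, η x = 1 := by
  let b : ContDiffBump (0 : E) := ⟨1, 2, one_pos, one_lt_two⟩
  have hb : ContDiff ℝ (⊤ : ℕ∞) b := b.contDiff
  obtain ⟨L, hL⟩ := (hb.continuous_fderiv (by simp)).bounded_above_of_compact_support
    (b.hasCompactSupport.fderiv ℝ)
  refine ⟨L, fun x₀ r hr => ?_⟩
  have h_deriv (x : E) : HasFDerivAt (fun x => b (r⁻¹ • (x - x₀)))
      ((fderiv ℝ b (r⁻¹ • (x - x₀))).comp (r⁻¹ • ContinuousLinearMap.id ℝ E)) x :=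
    (hb.differentiable (by simp) _).hasFDerivAt.comp x
      (((hasFDerivAt_id x).sub_const x₀).const_smul r⁻¹)
  have h_supp : Function.support (fun x => b (r⁻¹ • (x - x₀))) ⊆ closedBall x₀ (2 * r) := by
    intro x hx
    have : r⁻¹ • (x - x₀) ∈ ball 0 b.rOut := b.support_eq ▸ hx
    exact (norm_inv_smul_sub_le_iff hr).1 (mem_ball_zero_iff.1 this).le
  refine ⟨fun x => b (r⁻¹ • (x - x₀)), ⟨?_, ?_, fun x => b.nonneg, fun x => b.le_one, ?_⟩,
    closure_minimal h_supp isClosed_closedBall, ?_⟩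
  · exact hb.comp (by fun_prop)
  · exact .of_support_subset_isCompact (isCompact_closedBall x₀ (2 * r)) h_supp
  · intro x
    rw [(h_deriv x).fderiv, ContinuousLinearMap.comp_smul, ContinuousLinearMap.comp_id, norm_smul,
      norm_inv, Real.norm_of_nonneg hr.le, inv_mul_eq_div]
    gcongr
    exact hL _
  · intro x hx
    refine b.one_of_mem_closedBall (mem_closedBall_zero_iff.2 ?_)
    exact (norm_inv_smul_sub_le_iff hr).2 (by simpa [b] using hx)

end Cutoff

section TestField

variable {G E : Type*} [NormedAddCommGroup G] [NormedAddCommGroup E] [InnerProductSpace ℝ E]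

/-- The localized truncated power `η² Ψ(T) T` of a vector field `T`, used as a test field. -/
def testField (η : G → ℝ) (Ψ : E → ℝ) (T : G → E) (x : G) : E := η x ^ 2 • Ψ (T x) • T x

lemma tsupport_testField_subset (η : G → ℝ) (Ψ : E → ℝ) (T : G → E) :
    tsupport (testField η Ψ T) ⊆ tsupport η :=
  closure_mono fun x hx hηx => hx (by simp [testField, hηx])

variable [NormedSpace ℝ G] {s M L : ℝ} {Ψ : E → ℝ} {T : G → E} {η : G → ℝ}

lemma contDiff_testField (hΨ : IsTruncatedPower s M Ψ) (hη : IsCutoff L η)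
    (hT : ContDiff ℝ (⊤ : ℕ∞) T) : ContDiff ℝ (⊤ : ℕ∞) (testField η Ψ T) :=
  (hη.contDiff.pow 2).smul ((hΨ.contDiff.comp hT).smul hT)

lemma norm_testField_le (hΨ : IsTruncatedPower s M Ψ) (hη : IsCutoff L η) (x : G) :
    ‖testField η Ψ T x‖ ≤ M := by
  rw [testField, norm_smul, norm_smul, Real.norm_of_nonneg (hΨ.nonneg _),
    Real.norm_of_nonneg (sq_nonneg _)]
  refine (mul_le_of_le_one_left (mul_nonneg (hΨ.nonneg _) (norm_nonneg _)) ?_).trans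
    (hΨ.mul_norm_le _)
  exact pow_le_one₀ (hη.nonneg x) (hη.le_one x)

lemma norm_fderiv_testField_le (hΨ : IsTruncatedPower s M Ψ) (hη : IsCutoff L η) {x e : G}
    (hT : DifferentiableAt ℝ T x) (he : ‖e‖ ≤ 1) :
    ‖fderiv ℝ (testField η Ψ T) x e‖ ≤
      Ψ (T x) * η x * (7 * ‖fderiv ℝ T x e‖ + 2 * L * ‖T x‖) := by
  have h_field : HasFDerivAt (fun x => Ψ (T x) • T x)
      ((fderiv ℝ (fun y => Ψ y • y) (T x)).comp (fderiv ℝ T x)) x :=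
    HasFDerivAt.comp x (((hΨ.contDiff.smul contDiff_id).differentiable (by simp) _).hasFDerivAt)
      hT.hasFDerivAt
  have h_cutoff := (hη.contDiff.differentiable (by simp) x).hasFDerivAt.pow 2
  have h_fderiv : fderiv ℝ (testField η Ψ T) x = _ := (h_cutoff.smul h_field).fderiv
  have hΨ₀ := hΨ.nonneg (T x)
  have hη₀ := hη.nonneg x
  have h_grad : ‖fderiv ℝ η x e‖ ≤ L := by
    simpa using (fderiv ℝ η x).le_of_opNorm_le_of_le (hη.norm_fderiv_le x) he
  calc ‖fderiv ℝ (testField η Ψ T) x e‖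
      ≤ η x ^ 2 * ‖fderiv ℝ (fun y => Ψ y • y) (T x) (fderiv ℝ T x e)‖ +
        2 * η x * ‖fderiv ℝ η x e‖ * (Ψ (T x) * ‖T x‖) := by
        rw [h_fderiv]
        refine (norm_add_le _ _).trans_eq ?_
        simp [norm_smul, abs_of_nonneg hΨ₀, abs_of_nonneg hη₀]
    _ ≤ (η x * 1) * (7 * Ψ (T x) * ‖fderiv ℝ T x e‖) + 2 * η x * L * (Ψ (T x) * ‖T x‖) := by
        rw [sq]
        gcongr
        exacts [hη.le_one x, hΨ.norm_fderiv_smul_le _ _]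
    _ = Ψ (T x) * η x * (7 * ‖fderiv ℝ T x e‖ + 2 * L * ‖T x‖) := by ring

end TestField

section Energy

variable {d : ℕ} {E : Type*} [NormedAddCommGroup E] [InnerProductSpace ℝ E] {s M L : ℝ}
  {Ψ : E → ℝ} {T : Ed d → E} {η : Ed d → ℝ}

lemma sum_mul_add_sq_le {κ : Type*} (t : Finset κ) (a : κ → ℝ) (k b : ℝ) :
    (∑ i ∈ t, (k * a i + b)) ^ 2 ≤
      2 * k ^ 2 * t.card * ∑ i ∈ t, a i ^ 2 + 2 * t.card ^ 2 * b ^ 2 := by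
  calc (∑ i ∈ t, (k * a i + b)) ^ 2 ≤ t.card * ∑ i ∈ t, (k * a i + b) ^ 2 :=
        sq_sum_le_card_mul_sum_sq
    _ ≤ t.card * ∑ i ∈ t, (2 * k ^ 2 * a i ^ 2 + 2 * b ^ 2) := by
        gcongr with i
        nlinarith [sq_nonneg (k * a i - b)]
    _ = _ := by
        rw [Finset.sum_add_distrib, ← Finset.mul_sum, Finset.sum_const, nsmul_eq_mul]
        ring

/-- Up to the factor `ω²`, the part of the integration by parts error that is not absorbed. -/
def errorDensity (L : ℝ) (T : Ed d → E) (x : Ed d) : ℝ :=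
  49 * d * ∑ i, ‖fderiv ℝ T x (EuclideanSpace.single i 1)‖ ^ 2 + 4 * d ^ 2 * L ^ 2 * ‖T x‖ ^ 2

lemma mul_sum_norm_fderiv_testField_le (hΨ : IsTruncatedPower s M Ψ) (hη : IsCutoff L η)
    {x : Ed d} (hT : DifferentiableAt ℝ T x) {ω : ℝ} (hω : 0 ≤ ω) :
    ω * ∑ i, ‖fderiv ℝ (testField η Ψ T) x (EuclideanSpace.single i 1)‖ ≤
      2⁻¹ * (η x ^ 2 * (Ψ (T x) * ‖T x‖ ^ s)) + ω ^ 2 * errorDensity L T x := by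
  set S := ∑ i, (7 * ‖fderiv ℝ T x (EuclideanSpace.single i 1)‖ + 2 * L * ‖T x‖) with hS
  have h_sum : ∑ i, ‖fderiv ℝ (testField η Ψ T) x (EuclideanSpace.single i 1)‖ ≤
      Ψ (T x) * η x * S := by
    rw [hS, Finset.mul_sum]
    exact Finset.sum_le_sum fun i _ => norm_fderiv_testField_le hΨ hη hT (by simp)
  have h_sq : S ^ 2 ≤ 2 * errorDensity L T x := by
    refine (sum_mul_add_sq_le _ _ _ _).trans_eq ?_
    rw [errorDensity, Finset.card_univ, Fintype.card_fin]
    ring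
  have h_young : ω * (Ψ (T x) * η x * S) ≤ 2⁻¹ * (Ψ (T x) * η x) ^ 2 + 2⁻¹ * ω ^ 2 * S ^ 2 := by
    nlinarith [sq_nonneg (Ψ (T x) * η x - ω * S)]
  have h_power : (Ψ (T x) * η x) ^ 2 ≤ η x ^ 2 * (Ψ (T x) * ‖T x‖ ^ s) := by
    rw [mul_pow, mul_comm, sq (Ψ _)]
    have := hΨ.nonneg (T x)
    gcongr
    exact hΨ.le_norm_rpow _
  calc _ ≤ ω * (Ψ (T x) * η x * S) := by gcongr
    _ ≤ 2⁻¹ * (Ψ (T x) * η x) ^ 2 + 2⁻¹ * ω ^ 2 * S ^ 2 := h_young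
    _ ≤ 2⁻¹ * (η x ^ 2 * (Ψ (T x) * ‖T x‖ ^ s)) + 2⁻¹ * ω ^ 2 * (2 * errorDensity L T x) := by
        gcongr
    _ = _ := by ring

lemma continuous_errorDensity (L : ℝ) (hT : ContDiff ℝ (⊤ : ℕ∞) T) :
    Continuous (errorDensity L T) := by
  have h_deriv (i : Fin d) : Continuous fun x => fderiv ℝ T x (EuclideanSpace.single i 1) :=
    (hT.continuous_fderiv (by simp)).clm_apply continuous_const
  have := hT.continuous
  unfold errorDensity
  fun_prop

lemma continuous_cutoff_sq_mul (hs : 0 ≤ s) (hΨ : IsTruncatedPower s M Ψ) (hη : IsCutoff L η)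
    (hT : Continuous T) : Continuous fun x => η x ^ 2 * (Ψ (T x) * ‖T x‖ ^ s) :=
  (hη.contDiff.continuous.pow 2).mul ((hΨ.contDiff.continuous.comp hT).mul
    (hT.norm.rpow_const fun _ => Or.inr hs))

variable {ι : Type} [Fintype ι] {U : Set (Ed d)} {u : Ed d → EuclideanSpace ℝ ι}
  {g : Ed d → EuclideanSpace ℝ (ι × Fin d)} {c : EuclideanSpace ℝ ι} {ω : ℝ}

lemma IsWeakGrad.setIntegral_inner_testField_le {Ψ : EuclideanSpace ℝ (ι × Fin d) → ℝ}
    {T : Ed d → EuclideanSpace ℝ (ι × Fin d)} (h : IsWeakGrad U u g)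
    (hu : LocallyIntegrableOn u U) (hg : LocallyIntegrableOn g U) (hω₀ : 0 ≤ ω)
    (hω : ∀ x ∈ U, ‖u x - c‖ ≤ ω) (hs : 0 ≤ s) (hΨ : IsTruncatedPower s M Ψ) (hη : IsCutoff L η)
    (hηU : tsupport η ⊆ U) (hT : ContDiff ℝ (⊤ : ℕ∞) T) :
    ∫ x in tsupport η, ⟪g x, testField η Ψ T x⟫ ≤
      2⁻¹ * (∫ x in tsupport η, η x ^ 2 * (Ψ (T x) * ‖T x‖ ^ s)) +
        ω ^ 2 * ∫ x in tsupport η, errorDensity L T x := by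
  have h_supp := tsupport_testField_subset η Ψ T
  have h_smooth := contDiff_testField hΨ hη hT
  have h_comp : HasCompactSupport (testField η Ψ T) :=
    hη.hasCompactSupport.of_isClosed_subset isClosed_closure h_supp
  have h_int {f : Ed d → ℝ} (hf : Continuous f) : IntegrableOn f (tsupport η) :=
    hf.continuousOn.integrableOn_compact hη.hasCompactSupport
  have h_deriv (i : Fin d) :
      Continuous fun x => fderiv ℝ (testField η Ψ T) x (EuclideanSpace.single i 1) :=
    (h_smooth.continuous_fderiv (by simp)).clm_apply continuous_const
  have h_power := h_int (continuous_cutoff_sq_mul hs hΨ hη hT.continuous)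
  have h_error := h_int (continuous_errorDensity L hT)
  calc ∫ x in tsupport η, ⟪g x, testField η Ψ T x⟫ = ∫ x, ⟪g x, testField η Ψ T x⟫ := by
        refine setIntegral_eq_integral_of_forall_compl_eq_zero fun x hx => ?_
        rw [image_eq_zero_of_notMem_tsupport fun hx' => hx (h_supp hx'), inner_zero_right]
    _ ≤ ∫ x, ω * ∑ i, ‖fderiv ℝ (testField η Ψ T) x (EuclideanSpace.single i 1)‖ :=
        h.integral_inner_le_of_norm_sub_le hu hg h_smooth h_comp (h_supp.trans hηU) hω
    _ = ∫ x in tsupport η, ω * ∑ i, ‖fderiv ℝ (testField η Ψ T) x (EuclideanSpace.single i 1)‖ := by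
        refine (setIntegral_eq_integral_of_forall_compl_eq_zero fun x hx => ?_).symm
        simp [fderiv_eq_zero_of_notMem_tsupport fun hx' => hx (h_supp hx')]
    _ ≤ ∫ x in tsupport η,
          (2⁻¹ * (η x ^ 2 * (Ψ (T x) * ‖T x‖ ^ s)) + ω ^ 2 * errorDensity L T x) := by
        refine setIntegral_mono (h_int (by fun_prop))
          ((h_power.const_mul _).add (h_error.const_mul _)) fun x => ?_
        exact mul_sum_norm_fderiv_testField_le hΨ hη (hT.differentiable (by simp) x) hω₀
    _ = _ := by
        rw [integral_add (h_power.const_mul _) (h_error.const_mul _), integral_const_mul,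
          integral_const_mul]

lemma memLp_indicator_of_restrict {F : Type*} [NormedAddCommGroup F] {f : Ed d → F}
    (hU : MeasurableSet U) (hf : MemLp f 2 (volume.restrict U)) :
    MemLp (U.indicator f) 2 ∧ LocallyIntegrable (U.indicator f) := by
  have := (memLp_indicator_iff_restrict hU).2 hf
  exact ⟨this, this.locallyIntegrable one_le_two⟩

lemma integral_norm_indicator_sq {F : Type*} [NormedAddCommGroup F] (hU : MeasurableSet U)
    (f : Ed d → F) : ∫ x, ‖U.indicator f x‖ ^ 2 = ∫ x in U, ‖f x‖ ^ 2 := by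
  rw [← integral_indicator hU]
  congr with x
  by_cases hx : x ∈ U <;> simp [hx]

lemma integrableOn_norm_mollify_sq {F : Type*} [NormedAddCommGroup F] [NormedSpace ℝ F]
    [CompleteSpace F] (b : ContDiffBump (0 : Ed d)) {f : Ed d → F} (hf : LocallyIntegrable f)
    {K : Set (Ed d)} (hK : IsCompact K) :
    IntegrableOn (fun x => ‖mollify volume b f x‖ ^ 2) K :=
  ((contDiff_mollify b hf).continuous.norm.pow 2).continuousOn.integrableOn_compact hK

lemma IsWeakGrad.setIntegral_errorDensity_mollify_le {κ : Type} [Fintype κ]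
    {V : Ed d → EuclideanSpace ℝ κ} {W : Ed d → EuclideanSpace ℝ (κ × Fin d)}
    (h : IsWeakGrad U V W) (hU : MeasurableSet U) (hV : MemLp V 2 (volume.restrict U))
    (hW : MemLp W 2 (volume.restrict U)) (b : ContDiffBump (0 : Ed d)) {K : Set (Ed d)}
    (hK : IsCompact K) (hKU : ∀ x ∈ K, closedBall x b.rOut ⊆ U) (L : ℝ) :
    ∫ x in K, errorDensity L (mollify volume b (U.indicator V)) x ≤
      49 * d * (∫ x in U, ‖W x‖ ^ 2) + 4 * d ^ 2 * L ^ 2 * ∫ x in U, ‖V x‖ ^ 2 := by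
  obtain ⟨hV₂, hV₁⟩ := memLp_indicator_of_restrict hU hV
  obtain ⟨hW₂, hW₁⟩ := memLp_indicator_of_restrict hU hW
  have hV_int := integrableOn_norm_mollify_sq b hV₁ hK
  have hW_int := integrableOn_norm_mollify_sq b hW₁ hK
  calc ∫ x in K, errorDensity L (mollify volume b (U.indicator V)) x
      = ∫ x in K, (49 * d * ‖mollify volume b (U.indicator W) x‖ ^ 2 +
          4 * d ^ 2 * L ^ 2 * ‖mollify volume b (U.indicator V) x‖ ^ 2) := by
        refine setIntegral_congr_fun hK.measurableSet fun x hx => ?_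
        simp only [errorDensity, h.sum_norm_fderiv_mollify_sq hU hV₁ hW₁ b (hKU x hx)]
    _ = 49 * d * (∫ x in K, ‖mollify volume b (U.indicator W) x‖ ^ 2) +
          4 * d ^ 2 * L ^ 2 * ∫ x in K, ‖mollify volume b (U.indicator V) x‖ ^ 2 := by
        rw [integral_add (hW_int.const_mul _) (hV_int.const_mul _), integral_const_mul,
          integral_const_mul]
    _ ≤ _ := by
        rw [← integral_norm_indicator_sq hU W, ← integral_norm_indicator_sq hU V]
        gcongr
        exacts [setIntegral_norm_mollify_sq_le b hW₂ K, setIntegral_norm_mollify_sq_le b hV₂ K]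

lemma inner_testField_of_inner_eq {Ψ : E → ℝ} {y : E} {V : Ed d → E} {x : Ed d}
    (h : ⟪y, V x⟫ = ‖V x‖ ^ s) :
    ⟪y, testField η Ψ V x⟫ = η x ^ 2 * (Ψ (V x) * ‖V x‖ ^ s) := by
  rw [testField, inner_smul_right, inner_smul_right, h]

lemma tendsto_setIntegral_inner_testField [FiniteDimensional ℝ E] {T : ℕ → Ed d → E}
    {f V : Ed d → E} (hΨ : IsTruncatedPower s M Ψ) (hη : IsCutoff L η)
    (hf : IntegrableOn f (tsupport η)) (hT : ∀ k, ContDiff ℝ (⊤ : ℕ∞) (T k))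
    (h_lim : ∀ᵐ x ∂volume.restrict (tsupport η), Tendsto (fun k => T k x) atTop (𝓝 (V x))) :
    Tendsto (fun k => ∫ x in tsupport η, ⟪f x, testField η Ψ (T k) x⟫) atTop
      (𝓝 (∫ x in tsupport η, ⟪f x, testField η Ψ V x⟫)) := by
  refine tendsto_integral_of_dominated_convergence (fun x => ‖f x‖ * M)
    (fun k => hf.aestronglyMeasurable.inner
      (contDiff_testField hΨ hη (hT k)).continuous.aestronglyMeasurable)
    (hf.norm.mul_const M) (fun k => ae_of_all _ fun x => ?_) ?_
  · refine (norm_inner_le_norm _ _).trans ?_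
    gcongr
    exact norm_testField_le hΨ hη x
  · filter_upwards [h_lim] with x hx
    exact tendsto_const_nhds.inner
      ((((hΨ.contDiff.continuous.tendsto _).comp hx).smul hx).const_smul _)

lemma cutoff_sq_mul_nonneg (hΨ : IsTruncatedPower s M Ψ) (x : Ed d) :
    0 ≤ η x ^ 2 * (Ψ (T x) * ‖T x‖ ^ s) := by
  have := hΨ.nonneg (T x)
  positivity

lemma cutoff_sq_mul_le (hΨ : IsTruncatedPower s M Ψ) (hη : IsCutoff L η) (x : Ed d) :
    η x ^ 2 * (Ψ (T x) * ‖T x‖ ^ s) ≤ M :=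
  (mul_le_of_le_one_left (mul_nonneg (hΨ.nonneg _) (by positivity))
    (pow_le_one₀ (hη.nonneg x) (hη.le_one x))).trans (hΨ.mul_norm_rpow_le _)

lemma tendsto_setIntegral_cutoff_sq_mul {T : ℕ → Ed d → E} {V : Ed d → E} (hs : 0 ≤ s)
    (hΨ : IsTruncatedPower s M Ψ) (hη : IsCutoff L η) (hT : ∀ k, Continuous (T k))
    (h_lim : ∀ᵐ x ∂volume.restrict (tsupport η), Tendsto (fun k => T k x) atTop (𝓝 (V x))) :
    Tendsto (fun k => ∫ x in tsupport η, η x ^ 2 * (Ψ (T k x) * ‖T k x‖ ^ s)) atTop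
      (𝓝 (∫ x in tsupport η, η x ^ 2 * (Ψ (V x) * ‖V x‖ ^ s))) := by
  have h_finite : volume (tsupport η) ≠ ∞ := hη.hasCompactSupport.measure_lt_top.ne
  refine tendsto_integral_of_dominated_convergence (fun _ => M)
    (fun k => (continuous_cutoff_sq_mul hs hΨ hη (hT k)).aestronglyMeasurable)
    (integrableOn_const h_finite) (fun k => ae_of_all _ fun x => ?_) ?_
  · rw [Real.norm_of_nonneg (cutoff_sq_mul_nonneg hΨ x)]
    exact cutoff_sq_mul_le hΨ hη x
  · filter_upwards [h_lim] with x hx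
    exact (((hΨ.contDiff.continuous.tendsto _).comp hx).mul
      (hx.norm.rpow_const (Or.inr hs))).const_mul _

variable {V : Ed d → EuclideanSpace ℝ (ι × Fin d)}
  {W : Ed d → EuclideanSpace ℝ ((ι × Fin d) × Fin d)}

lemma IsWeakGrad.setIntegral_truncated_le {Ψ : EuclideanSpace ℝ (ι × Fin d) → ℝ}
    (h : IsWeakGrad U u g) (hVW : IsWeakGrad U V W) (hU : IsOpen U)
    (hu : LocallyIntegrableOn u U) (hg : LocallyIntegrableOn g U)
    (hV : MemLp V 2 (volume.restrict U)) (hW : MemLp W 2 (volume.restrict U))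
    (hgV : ∀ x, ⟪g x, V x⟫ = ‖V x‖ ^ s) (hω₀ : 0 ≤ ω) (hω : ∀ x ∈ U, ‖u x - c‖ ≤ ω)
    (hs : 0 ≤ s) (hΨ : IsTruncatedPower s M Ψ) (hη : IsCutoff L η) (hηU : tsupport η ⊆ U) :
    ∫ x in tsupport η, η x ^ 2 * (Ψ (V x) * ‖V x‖ ^ s) ≤
      2 * ω ^ 2 * (49 * d * (∫ x in U, ‖W x‖ ^ 2) + 4 * d ^ 2 * L ^ 2 * ∫ x in U, ‖V x‖ ^ 2) := by
  obtain ⟨-, hV₁⟩ := memLp_indicator_of_restrict hU.measurableSet hV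
  obtain ⟨b, hb, h_conv⟩ := exists_ae_tendsto_mollify hV₁
  set T := fun k => mollify volume (b k) (U.indicator V)
  have hT (k) : ContDiff ℝ (⊤ : ℕ∞) (T k) := contDiff_mollify (b k) hV₁
  have h_lim : ∀ᵐ x ∂volume.restrict (tsupport η), Tendsto (fun k => T k x) atTop (𝓝 (V x)) := by
    filter_upwards [ae_restrict_of_ae h_conv,
      ae_restrict_mem (isClosed_tsupport η).measurableSet] with x hx hx_supp
    rwa [indicator_of_mem (hηU hx_supp)] at hx
  obtain ⟨r, hr, hrU⟩ := hη.hasCompactSupport.exists_cthickening_subset_open hU hηU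
  have h_inside : ∀ᶠ k in atTop, ∀ x ∈ tsupport η, closedBall x (b k).rOut ⊆ U := by
    filter_upwards [hb.eventually_le_const hr] with k hk x hx
    exact (closedBall_subset_closedBall hk).trans
      ((closedBall_subset_cthickening hx r).trans hrU)
  have h_left := tendsto_setIntegral_inner_testField hΨ hη
    (hg.integrableOn_compact_subset hηU hη.hasCompactSupport) hT h_lim
  have h_right := tendsto_setIntegral_cutoff_sq_mul hs hΨ hη (fun k => (hT k).continuous) h_lim
  have h_limit := le_of_tendsto_of_tendsto h_left ((h_right.const_mul 2⁻¹).add_const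
    (ω ^ 2 * (49 * d * (∫ x in U, ‖W x‖ ^ 2) + 4 * d ^ 2 * L ^ 2 * ∫ x in U, ‖V x‖ ^ 2))) <| by
      filter_upwards [h_inside] with k hk
      refine (h.setIntegral_inner_testField_le hu hg hω₀ hω hs hΨ hη hηU (hT k)).trans ?_
      gcongr
      exact hVW.setIntegral_errorDensity_mollify_le hU.measurableSet hV hW (b k)
        hη.hasCompactSupport hk L
  simp only [inner_testField_of_inner_eq (hgV _)] at h_limit
  linarith

lemma integrableOn_cutoff_sq_mul {V : Ed d → E} (hs : 0 ≤ s) (hΨ : IsTruncatedPower s M Ψ)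
    (hη : IsCutoff L η) (hV : AEStronglyMeasurable V (volume.restrict (tsupport η))) :
    IntegrableOn (fun x => η x ^ 2 * (Ψ (V x) * ‖V x‖ ^ s)) (tsupport η) := by
  have h_power : Continuous fun y : E => Ψ y * ‖y‖ ^ s :=
    hΨ.contDiff.continuous.mul (continuous_norm.rpow_const fun _ => Or.inr hs)
  refine .of_bound hη.hasCompactSupport.measure_lt_top
    ((hη.contDiff.continuous.pow 2).aestronglyMeasurable.mul
      (h_power.comp_aestronglyMeasurable hV)) M (ae_of_all _ fun x => ?_)
  rw [Real.norm_of_nonneg (cutoff_sq_mul_nonneg hΨ x)]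
  exact cutoff_sq_mul_le hΨ hη x

lemma setLIntegral_cutoff_sq_mul_rpow_le_of_truncPow {V : Ed d → E} (hs : s ∈ Ioc 0 3)
    (hη : IsCutoff L η) (hV : AEStronglyMeasurable V (volume.restrict (tsupport η))) {B : ℝ}
    (hB : ∀ δ > 0, ∫ x in tsupport η, η x ^ 2 * (truncPow s δ (‖V x‖ ^ 2) * ‖V x‖ ^ s) ≤ B) :
    ∫⁻ x in tsupport η, ENNReal.ofReal (η x ^ 2 * ‖V x‖ ^ (2 * s)) ≤ ENNReal.ofReal B := by
  let δ (n : ℕ) : ℝ := 1 / (n + 1)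
  have hδ (n) : 0 < δ n := Nat.one_div_pos_of_nat
  let Ψ (n : ℕ) (y : E) : ℝ := truncPow s (δ n) (‖y‖ ^ 2)
  have hΨ (n) : IsTruncatedPower s (1 + (δ n ^ 3)⁻¹) (Ψ n) :=
    isTruncatedPower_truncPow ⟨hs.1.le, hs.2⟩ (hδ n)
  let F (n : ℕ) (x : Ed d) : ℝ := η x ^ 2 * (Ψ n (V x) * ‖V x‖ ^ s)
  have hF_int (n) : IntegrableOn (F n) (tsupport η) :=
    integrableOn_cutoff_sq_mul hs.1.le (hΨ n) hη hV
  have hF_le (n) : ∫⁻ x in tsupport η, ENNReal.ofReal (F n x) ≤ ENNReal.ofReal B := by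
    rw [← ofReal_integral_eq_lintegral_ofReal (hF_int n)
      (ae_of_all _ (cutoff_sq_mul_nonneg (hΨ n)))]
    exact ENNReal.ofReal_le_ofReal (hB _ (hδ n))
  have hF_lim (x) : Tendsto (fun n => ENNReal.ofReal (F n x)) atTop
      (𝓝 (ENNReal.ofReal (η x ^ 2 * ‖V x‖ ^ (2 * s)))) :=
    (ENNReal.continuous_ofReal.tendsto _).comp
      ((tendsto_mul_truncPow_norm_sq hs.1 (η x ^ 2) (V x)).comp
        tendsto_one_div_add_atTop_nhds_zero_nat)
  calc ∫⁻ x in tsupport η, ENNReal.ofReal (η x ^ 2 * ‖V x‖ ^ (2 * s))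
      = ∫⁻ x in tsupport η, liminf (fun n => ENNReal.ofReal (F n x)) atTop := by
        simp only [(hF_lim _).liminf_eq]
    _ ≤ liminf (fun n => ∫⁻ x in tsupport η, ENNReal.ofReal (F n x)) atTop :=
        lintegral_liminf_le' fun n => (hF_int n).aestronglyMeasurable.aemeasurable.ennreal_ofReal
    _ ≤ ENNReal.ofReal B := liminf_le_of_frequently_le' (Frequently.of_forall hF_le)

lemma IsWeakGrad.setLIntegral_rpow_le (h : IsWeakGrad U u g) (hVW : IsWeakGrad U V W)
    (hU : IsOpen U) (hu : LocallyIntegrableOn u U) (hg : LocallyIntegrableOn g U)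
    (hV : MemLp V 2 (volume.restrict U)) (hW : MemLp W 2 (volume.restrict U))
    (hgV : ∀ x, ⟪g x, V x⟫ = ‖V x‖ ^ s) (hω₀ : 0 ≤ ω) (hω : ∀ x ∈ U, ‖u x - c‖ ≤ ω)
    (hs : s ∈ Ioc 0 3) (hη : IsCutoff L η) (hηU : tsupport η ⊆ U) :
    ∫⁻ x in tsupport η, ENNReal.ofReal (η x ^ 2 * ‖V x‖ ^ (2 * s)) ≤
      ENNReal.ofReal (2 * ω ^ 2 *
        (49 * d * (∫ x in U, ‖W x‖ ^ 2) + 4 * d ^ 2 * L ^ 2 * ∫ x in U, ‖V x‖ ^ 2)) := by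
  refine setLIntegral_cutoff_sq_mul_rpow_le_of_truncPow hs hη (hV.1.mono_set hηU) fun δ hδ => ?_
  exact h.setIntegral_truncated_le hVW hU hu hg hV hW hgV hω₀ hω hs.1.le
    (isTruncatedPower_truncPow ⟨hs.1.le, hs.2⟩ hδ) hη hηU

end Energy

section VMap

variable {κ : Type} [Fintype κ] {p : ℝ}

lemma measurable_Vm (p : ℝ) : Measurable (Vm p : EuclideanSpace ℝ κ → EuclideanSpace ℝ κ) :=
  (measurable_norm.pow_const _).smul measurable_id

lemma norm_Vm (hp : 0 < p) (y : EuclideanSpace ℝ κ) : ‖Vm p y‖ = ‖y‖ ^ (p / 2) := by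
  rw [Vm, norm_smul, Real.norm_of_nonneg (by positivity),
    ← Real.rpow_add_one' (norm_nonneg y) (by linarith)]
  ring_nf

lemma norm_Vm_sq (hp : 0 < p) (y : EuclideanSpace ℝ κ) : ‖Vm p y‖ ^ 2 = ‖y‖ ^ p := by
  rw [norm_Vm hp, ← Real.rpow_mul_natCast (norm_nonneg y), Nat.cast_ofNat,
    div_mul_cancel₀ _ two_ne_zero]

lemma inner_Vm (hp : 0 < p) (y : EuclideanSpace ℝ κ) :
    ⟪y, Vm p y⟫ = ‖Vm p y‖ ^ (1 + 2 / p) := by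
  rw [norm_Vm hp, Vm, real_inner_smul_right, real_inner_self_eq_norm_sq,
    ← Real.rpow_add_natCast' (norm_nonneg y) (by push_cast; linarith),
    ← Real.rpow_mul (norm_nonneg y)]
  congr 1
  field_simp
  ring

lemma norm_Vm_rpow_two_mul (hp : 0 < p) (y : EuclideanSpace ℝ κ) :
    ‖Vm p y‖ ^ (2 * (1 + 2 / p)) = ‖y‖ ^ (p + 2) := by
  rw [norm_Vm hp, ← Real.rpow_mul (norm_nonneg y)]
  congr 1
  field_simp

variable {X : Type*} [MeasurableSpace X] {μ : Measure X} {g : X → EuclideanSpace ℝ κ}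

lemma integrable_norm_rpow_of_memLp_ofReal (hp : 0 < p) (hg : MemLp g (ENNReal.ofReal p) μ) :
    Integrable (fun x => ‖g x‖ ^ p) μ := by
  simpa only [ENNReal.toReal_ofReal hp.le] using
    hg.integrable_norm_rpow (by simpa using hp) ENNReal.ofReal_ne_top

lemma memLp_two_Vm (hp : 0 < p) (hg : MemLp g (ENNReal.ofReal p) μ) :
    MemLp (fun x => Vm p (g x)) 2 μ := by
  have h_meas : AEStronglyMeasurable (fun x => Vm p (g x)) μ :=
    ((measurable_Vm p).comp_aemeasurable hg.1.aemeasurable).aestronglyMeasurable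
  rw [memLp_two_iff_integrable_sq_norm h_meas]
  simpa only [norm_Vm_sq hp] using integrable_norm_rpow_of_memLp_ofReal hp hg

end VMap

section Cube

variable {d : ℕ} {c x y z : Ed d} {r R : ℝ}

lemma cube_eq_preimage (c : Ed d) (R : ℝ) :
    cube c R = WithLp.ofLp ⁻¹' (univ.pi fun i => ball (c i) (R / 2)) := by
  ext x
  simp [cube, Real.dist_eq]

lemma isOpen_cube (c : Ed d) (R : ℝ) : IsOpen (cube c R) := by
  rw [cube_eq_preimage]
  exact (isOpen_set_pi finite_univ fun _ _ => isOpen_ball).preimage (PiLp.continuous_ofLp 2 _)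

lemma volume_real_cube (c : Ed d) (hR : 0 ≤ R) : volume.real (cube c R) = R ^ d := by
  rw [cube_eq_preimage, measureReal_def,
    (PiLp.volume_preserving_ofLp (Fin d)).measure_preimage
      (MeasurableSet.univ_pi fun _ => measurableSet_ball).nullMeasurableSet, volume_pi_pi]
  simp [Real.volume_ball, mul_div_cancel₀, hR]

lemma mem_cube_self (z : Ed d) (hR : 0 < R) : z ∈ cube z R := fun i => by simpa using hR

lemma cube_mono (c : Ed d) (h : r ≤ R) : cube c r ⊆ cube c R :=
  fun x hx i => (hx i).trans_le (by linarith)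

lemma cube_subset_cube_add (hz : z ∈ cube c R) (r : ℝ) : cube z r ⊆ cube c (R + r) := by
  intro x hx i
  linarith [abs_sub_le (x i) (z i) (c i), hx i, hz i]

lemma closedBall_subset_cube (c : Ed d) (h : r < R / 2) : closedBall c r ⊆ cube c R := by
  intro x hx i
  have h_coord : |x i - c i| ≤ ‖x - c‖ := PiLp.norm_apply_le (x - c) i
  exact (h_coord.trans (by rwa [← dist_eq_norm])).trans_lt h

lemma dist_le_of_mem_cube (hx : x ∈ cube c R) (hy : y ∈ cube c R) : dist x y ≤ d * R := by
  have h_coord : ∀ i, |x i - y i| ≤ R := fun i => by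
    linarith [abs_sub_le (x i) (c i) (y i), hx i, hy i, abs_sub_comm (c i) (y i)]
  calc dist x y = ‖∑ i, (x i - y i) • EuclideanSpace.single i (1 : ℝ)‖ := by
        rw [dist_eq_norm, ← (EuclideanSpace.basisFun (Fin d) ℝ).sum_repr (x - y)]
        simp [EuclideanSpace.basisFun_apply]
    _ ≤ ∑ i, |x i - y i| := (norm_sum_le _ _).trans_eq (by simp [norm_smul])
    _ ≤ d * R := by simpa using Finset.sum_le_card_nsmul Finset.univ _ R fun i _ => h_coord i

lemma add_smul_mem_cube (hR : 0 < R) (hz : z ∈ cube 0 1) : c + R • z ∈ cube c R := by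
  intro i
  have := hz i
  simp only [PiLp.zero_apply, sub_zero] at this
  simpa [abs_mul, abs_of_pos hR, div_eq_mul_inv] using mul_lt_mul_of_pos_left this hR

lemma exists_finset_cube_subset_iUnion_closedBall (d : ℕ) {ε : ℝ} (hε : 0 < ε) :
    ∃ t : Finset (Ed d), ↑t ⊆ cube (0 : Ed d) 1 ∧ ∀ (c : Ed d) (R : ℝ), 0 < R →
      cube c R ⊆ ⋃ z ∈ t, closedBall (c + R • z) (ε * R) := by
  have h_bounded : cube (0 : Ed d) 1 ⊆ closedBall 0 (d * 1) := fun x hx =>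
    dist_le_of_mem_cube hx (by simp [cube])
  obtain ⟨t, ht, ht_fin, ht_cover⟩ := finite_approx_of_totallyBounded
    ((isCompact_closedBall _ _).totallyBounded.subset h_bounded) ε hε
  lift t to Finset (Ed d) using ht_fin
  refine ⟨t, ht, fun c R hR x hx => ?_⟩
  have hx' : R⁻¹ • (x - c) ∈ cube 0 1 := fun i => by
    have := hx i
    simp only [PiLp.smul_apply, PiLp.sub_apply, smul_eq_mul, PiLp.zero_apply, sub_zero, abs_mul,
      abs_inv, abs_of_pos hR]
    rw [inv_mul_lt_iff₀ hR]
    linarith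
  obtain ⟨z, hz, hxz⟩ := mem_iUnion₂.1 (ht_cover hx')
  refine mem_iUnion₂.2 ⟨z, hz, ?_⟩
  rw [← norm_inv_smul_sub_le_iff hR, ← sub_sub, smul_sub, inv_smul_smul₀ hR.ne', ← dist_eq_norm]
  exact (mem_ball.1 hxz).le

end Cube

section LpMean

variable {d : ℕ} {F : Type*} [NormedAddCommGroup F] {g : Ed d → F} {c z : Ed d} {p r R : ℝ}

/-- The normalized `L^p` norm `(⨍_E |g|^p)^{1/p}` over a set `E`. -/
def lpMean (p : ℝ) (g : Ed d → F) (E : Set (Ed d)) : ℝ :=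
  (⨍ x in E, ‖g x‖ ^ p) ^ (1 / p)

lemma setAverage_cube (f : Ed d → ℝ) (c : Ed d) (hR : 0 ≤ R) :
    ⨍ x in cube c R, f x = (R ^ d)⁻¹ * ∫ x in cube c R, f x := by
  rw [setAverage_eq, volume_real_cube c hR, smul_eq_mul]

lemma setAverage_norm_rpow_nonneg (p : ℝ) (g : Ed d → F) (E : Set (Ed d)) :
    0 ≤ ⨍ x in E, ‖g x‖ ^ p := by
  rw [setAverage_eq]
  positivity

lemma lpMean_nonneg (p : ℝ) (g : Ed d → F) (E : Set (Ed d)) : 0 ≤ lpMean p g E :=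
  Real.rpow_nonneg (setAverage_norm_rpow_nonneg p g E) _

lemma setIntegral_cube_norm_rpow (hp : 0 < p) (g : Ed d → F) (c : Ed d) (hR : 0 < R) :
    ∫ x in cube c R, ‖g x‖ ^ p = R ^ d * lpMean p g (cube c R) ^ p := by
  rw [lpMean, ← Real.rpow_mul (setAverage_norm_rpow_nonneg p g _), one_div_mul_cancel hp.ne',
    Real.rpow_one, setAverage_cube _ _ hR.le, mul_inv_cancel_left₀ (by positivity)]

lemma setAverage_cube_norm_rpow_le (hg : IntegrableOn (fun x => ‖g x‖ ^ p) (cube c R))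
    (hr : 0 < r) (hR : 0 < R) (hsub : cube z r ⊆ cube c R) :
    ⨍ x in cube z r, ‖g x‖ ^ p ≤ (R / r) ^ d * ⨍ x in cube c R, ‖g x‖ ^ p := by
  have h_mono : ∫ x in cube z r, ‖g x‖ ^ p ≤ ∫ x in cube c R, ‖g x‖ ^ p :=
    setIntegral_mono_set hg (Eventually.of_forall fun x => by positivity) hsub.eventuallyLE
  calc ⨍ x in cube z r, ‖g x‖ ^ p = (r ^ d)⁻¹ * ∫ x in cube z r, ‖g x‖ ^ p :=
        setAverage_cube _ _ hr.le
    _ ≤ (r ^ d)⁻¹ * ∫ x in cube c R, ‖g x‖ ^ p := by gcongr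
    _ = (R / r) ^ d * ⨍ x in cube c R, ‖g x‖ ^ p := by
        rw [setAverage_cube _ _ hR.le, div_pow]
        field_simp

lemma lpMean_cube_le (hp : 1 ≤ p) (hg : IntegrableOn (fun x => ‖g x‖ ^ p) (cube c R))
    (hr : 0 < r) (hrR : r ≤ R) (hsub : cube z r ⊆ cube c R) :
    lpMean p g (cube z r) ≤ (R / r) ^ d * lpMean p g (cube c R) := by
  have h_ratio : 1 ≤ (R / r) ^ d := one_le_pow₀ ((one_le_div hr).2 hrR)
  calc lpMean p g (cube z r)
      ≤ ((R / r) ^ d * ⨍ x in cube c R, ‖g x‖ ^ p) ^ (1 / p) :=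
        Real.rpow_le_rpow (setAverage_norm_rpow_nonneg p g _)
          (setAverage_cube_norm_rpow_le hg hr (hr.trans_le hrR) hsub) (by positivity)
    _ = ((R / r) ^ d) ^ (1 / p) * lpMean p g (cube c R) :=
        Real.mul_rpow (by positivity) (setAverage_norm_rpow_nonneg p g _)
    _ ≤ (R / r) ^ d * lpMean p g (cube c R) := by
        refine mul_le_mul_of_nonneg_right ?_ (lpMean_nonneg p g _)
        exact Real.rpow_le_self_of_one_le h_ratio (by rw [div_le_one] <;> linarith)

lemma memLp_and_lpMean_le_of_setLIntegral_le {K M : ℝ} (hp : 0 < p) (hR : 0 < R) (hK : 0 ≤ K)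
    (hM : 0 ≤ M) (hg : AEStronglyMeasurable g (volume.restrict (cube c R)))
    (hle : ∫⁻ x in cube c R, ENNReal.ofReal (‖g x‖ ^ p) ≤ ENNReal.ofReal (R ^ d * (K * M ^ p))) :
    MemLp g (ENNReal.ofReal p) (volume.restrict (cube c R)) ∧
      lpMean p g (cube c R) ≤ K ^ (1 / p) * M := by
  constructor
  · refine ⟨hg, ?_⟩
    rw [eLpNorm_lt_top_iff_lintegral_rpow_enorm_lt_top (by simpa using hp) ENNReal.ofReal_ne_top,
      ENNReal.toReal_ofReal hp.le]
    simp_rw [← ofReal_norm, ENNReal.ofReal_rpow_of_nonneg (norm_nonneg _) hp.le]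
    exact hle.trans_lt ENNReal.ofReal_lt_top
  · have h_int : ∫ x in cube c R, ‖g x‖ ^ p ≤ R ^ d * (K * M ^ p) := by
      rw [integral_eq_lintegral_of_nonneg_ae (Eventually.of_forall fun x => by positivity)
        (hg.norm.aemeasurable.pow_const p).aestronglyMeasurable]
      exact ENNReal.toReal_le_of_le_ofReal (by positivity) hle
    calc lpMean p g (cube c R) ≤ (K * M ^ p) ^ (1 / p) := by
          refine Real.rpow_le_rpow (setAverage_norm_rpow_nonneg p g _) ?_ (by positivity)
          rwa [setAverage_cube _ _ hR.le, inv_mul_le_iff₀ (by positivity)]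
      _ = K ^ (1 / p) * M := by
          rw [Real.mul_rpow hK (by positivity), ← Real.rpow_mul hM, mul_one_div_cancel hp.ne',
            Real.rpow_one]

end LpMean

section HigherIntegrability

lemma integral_norm_sq_le_of_lintegral_le {X Y E F : Type*} [MeasurableSpace X] [MeasurableSpace Y]
    [NormedAddCommGroup E] [NormedAddCommGroup F] {μ : Measure X} {ν : Measure Y} {f : X → E}
    {h : Y → F} {K : ℝ} (hK : 0 ≤ K) (hf : AEStronglyMeasurable f μ) (hh : MemLp h 2 ν)
    (hle : ∫⁻ x, (‖f x‖₊ : ℝ≥0∞) ^ 2 ∂μ ≤ ENNReal.ofReal K * ∫⁻ y, (‖h y‖₊ : ℝ≥0∞) ^ 2 ∂ν) :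
    ∫ x, ‖f x‖ ^ 2 ∂μ ≤ K * ∫ y, ‖h y‖ ^ 2 ∂ν := by
  have h_meas : AEStronglyMeasurable (fun x => ‖f x‖ ^ 2) μ := hf.norm.pow 2
  rw [integral_eq_lintegral_of_nonneg_ae (Eventually.of_forall fun x => by positivity) h_meas]
  refine ENNReal.toReal_le_of_le_ofReal (by positivity) ?_
  rw [ENNReal.ofReal_mul hK, ofReal_integral_eq_lintegral_ofReal
    ((memLp_two_iff_integrable_sq_norm hh.1).1 hh) (Eventually.of_forall fun x => by positivity)]
  simpa only [ENNReal.ofReal_pow (norm_nonneg _), ofReal_norm, enorm_eq_nnnorm] using hle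

lemma setLIntegral_le_card_mul_of_subset_iUnion {X ι : Type*} [MeasurableSpace X] {μ : Measure X}
    {f : X → ℝ≥0∞} {s : Set X} {t : Finset ι} {B : ι → Set X} {K : ℝ≥0∞}
    (hs : s ⊆ ⋃ i ∈ t, B i) (hK : ∀ i ∈ t, ∫⁻ x in B i, f x ∂μ ≤ K) :
    ∫⁻ x in s, f x ∂μ ≤ t.card * K :=
  calc ∫⁻ x in s, f x ∂μ ≤ ∫⁻ x in ⋃ i ∈ t, B i, f x ∂μ := lintegral_mono_set hs
    _ ≤ ∑ i ∈ t, ∫⁻ x in B i, f x ∂μ := by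
        rw [← iUnion_subtype (· ∈ t) fun i => B i, ← Finset.sum_coe_sort]
        exact (lintegral_iUnion_le _ _).trans_eq (tsum_fintype _)
    _ ≤ t.card * K := by simpa using Finset.sum_le_card_nsmul t _ K hK

/-- Square integrability of `W` and the Caccioppoli inequality `∫_Q |W|² ≤ (c₁ / R²) ∫_{4Q} |V|²`
on all cubes `Q` of sidelength `R` with `4Q ⊆ Ω`; in applications `W` is the weak gradient of
`V`. -/
def SatisfiesCaccioppoli {d : ℕ} {κ ν : Type} [Fintype κ] [Fintype ν] (c₁ : ℝ) (Ω : Set (Ed d))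
    (V : Ed d → EuclideanSpace ℝ κ) (W : Ed d → EuclideanSpace ℝ ν) : Prop :=
  ∀ (cq : Ed d) (R : ℝ), 0 < R → cube cq (4 * R) ⊆ Ω →
    MemLp W 2 (volume.restrict (cube cq R)) ∧
    ∫⁻ x in cube cq R, (‖W x‖₊ : ℝ≥0∞) ^ 2 ≤
      ENNReal.ofReal (c₁ / R ^ 2) * ∫⁻ x in cube cq (4 * R), (‖V x‖₊ : ℝ≥0∞) ^ 2

/-- The oscillation of `u` on every cube `Q` of sidelength `R` with `3Q ⊆ Ω` is at most
`c₂ R ((⨍_{2Q} |g|^p)^{1/p} + 1)`: the form in which the interior Hölder estimate is used. -/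
def SatisfiesOscillationBound {d : ℕ} {ι κ : Type} [Fintype ι] [Fintype κ] (p c₂ : ℝ)
    (Ω : Set (Ed d)) (u : Ed d → EuclideanSpace ℝ ι) (g : Ed d → EuclideanSpace ℝ κ) : Prop :=
  ∀ (cq : Ed d) (R : ℝ), 0 < R → cube cq (3 * R) ⊆ Ω → ∀ x ∈ cube cq R, ∀ y ∈ cube cq R,
    ‖u x - u y‖ ≤ c₂ * R * (lpMean p g (cube cq (2 * R)) + 1)

variable {d : ℕ} {ι : Type} [Fintype ι] {p c₁ c₂ L ω R : ℝ} {Ω : Set (Ed d)} {cq z : Ed d}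
  {u : Ed d → EuclideanSpace ℝ ι} {g : Ed d → EuclideanSpace ℝ (ι × Fin d)}
  {W : Ed d → EuclideanSpace ℝ ((ι × Fin d) × Fin d)} {η : Ed d → ℝ}

lemma satisfiesOscillationBound_of_holder {α : ℝ} (hα : α ∈ Ioo (0 : ℝ) 1) (hc₂ : 0 ≤ c₂)
    (h : ∀ (cq : Ed d) (R : ℝ), 0 < R → cube cq (3 * R) ⊆ Ω → ∀ x ∈ cube cq R, ∀ y ∈ cube cq R,
      ‖u x - u y‖ ≤ c₂ * R ^ (1 - α) * (lpMean p g (cube cq (2 * R)) + 1) * dist x y ^ α) :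
    SatisfiesOscillationBound p (c₂ * (d + 1)) Ω u g := by
  intro cq R hR hsub x hx y hy
  have h_dist : dist x y ≤ (d + 1) * R := by linarith [dist_le_of_mem_cube hx hy]
  have h_one_le : (1 : ℝ) ≤ d + 1 := by simp
  have h_pow : dist x y ^ α ≤ (d + 1) * R ^ α :=
    calc dist x y ^ α ≤ ((d + 1) * R) ^ α := Real.rpow_le_rpow dist_nonneg h_dist hα.1.le
      _ = (d + 1 : ℝ) ^ α * R ^ α := Real.mul_rpow (by positivity) hR.le
      _ ≤ (d + 1) * R ^ α := by
        gcongr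
        exact Real.rpow_le_self_of_one_le h_one_le hα.2.le
  have h_mean := lpMean_nonneg p g (cube cq (2 * R))
  calc ‖u x - u y‖
      ≤ c₂ * R ^ (1 - α) * (lpMean p g (cube cq (2 * R)) + 1) * dist x y ^ α :=
        h cq R hR hsub x hx y hy
    _ ≤ c₂ * R ^ (1 - α) * (lpMean p g (cube cq (2 * R)) + 1) * ((d + 1) * R ^ α) := by gcongr
    _ = c₂ * (d + 1) * (R ^ (1 - α) * R ^ α) * (lpMean p g (cube cq (2 * R)) + 1) := by ring
    _ = c₂ * (d + 1) * R * (lpMean p g (cube cq (2 * R)) + 1) := by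
        rw [← Real.rpow_add hR, sub_add_cancel, Real.rpow_one]

lemma SatisfiesOscillationBound.norm_sub_le (h : SatisfiesOscillationBound p c₂ Ω u g)
    (hp : 1 ≤ p) (hc₂ : 0 ≤ c₂) (hR : 0 < R) (hsub : cube cq (2 * R) ⊆ Ω)
    (hg : IntegrableOn (fun x => ‖g x‖ ^ p) (cube cq (2 * R))) (hz : z ∈ cube cq R) :
    ∀ x ∈ cube z (R / 4),
      ‖u x - u z‖ ≤ c₂ * (R / 4) * (4 ^ d * (lpMean p g (cube cq (2 * R)) + 1)) := by
  intro x hx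
  have h_cube : ∀ r ≤ R, cube z r ⊆ cube cq (2 * R) := fun r hr =>
    (cube_subset_cube_add hz r).trans (cube_mono cq (by linarith))
  have h_mean : lpMean p g (cube z (2 * (R / 4))) ≤ 4 ^ d * lpMean p g (cube cq (2 * R)) := by
    have := lpMean_cube_le hp hg (by positivity) (by linarith) (h_cube (2 * (R / 4)) (by linarith))
    rwa [show 2 * R / (2 * (R / 4)) = 4 by field_simp] at this
  have h_one_le : (1 : ℝ) ≤ 4 ^ d := one_le_pow₀ (by norm_num)
  calc ‖u x - u z‖ ≤ c₂ * (R / 4) * (lpMean p g (cube z (2 * (R / 4))) + 1) :=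
        h z (R / 4) (by positivity) ((h_cube _ (by linarith)).trans hsub) x hx z
          (mem_cube_self z (by positivity))
    _ ≤ c₂ * (R / 4) * (4 ^ d * (lpMean p g (cube cq (2 * R)) + 1)) := by
        gcongr
        linarith

lemma SatisfiesCaccioppoli.setIntegral_norm_sq_le {κ ν : Type} [Fintype κ] [Fintype ν]
    {V : Ed d → EuclideanSpace ℝ κ} {W : Ed d → EuclideanSpace ℝ ν}
    (h : SatisfiesCaccioppoli c₁ Ω V W) (hc₁ : 0 ≤ c₁) (hR : 0 < R) (hsub : cube z (4 * R) ⊆ Ω)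
    (hV : MemLp V 2 (volume.restrict (cube z (4 * R)))) :
    ∫ x in cube z R, ‖W x‖ ^ 2 ≤ c₁ / R ^ 2 * ∫ x in cube z (4 * R), ‖V x‖ ^ 2 :=
  have ⟨hW, hle⟩ := h z R hR hsub
  integral_norm_sq_le_of_lintegral_le (by positivity) hW.1 hV hle

lemma setLIntegral_norm_rpow_le_of_eq_one {κ : Type} [Fintype κ] {g : Ed d → EuclideanSpace ℝ κ}
    {S : Set (Ed d)} (hp : 0 < p) (hS : MeasurableSet S) (hηS : ∀ x ∈ S, η x = 1) :
    ∫⁻ x in S, ENNReal.ofReal (‖g x‖ ^ (p + 2)) ≤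
      ∫⁻ x in tsupport η, ENNReal.ofReal (η x ^ 2 * ‖Vm p (g x)‖ ^ (2 * (1 + 2 / p))) := by
  refine (setLIntegral_congr_fun hS fun x hx => ?_).trans_le
    (lintegral_mono_set fun x hx => subset_tsupport η (by simp [hηS x hx]))
  simp only [norm_Vm_rpow_two_mul hp, hηS x hx, one_pow, one_mul]

lemma IsWeakGrad.setLIntegral_norm_rpow_le_of_isCutoff {S : Set (Ed d)} {b : EuclideanSpace ℝ ι}
    (h : IsWeakGrad Ω u g) (hVW : IsWeakGrad Ω (fun x => Vm p (g x)) W) (hp : 1 ≤ p)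
    (hu : MemLp u (ENNReal.ofReal p) (volume.restrict Ω))
    (hg : MemLp g (ENNReal.ofReal p) (volume.restrict Ω)) (hc₁ : 0 ≤ c₁)
    (hcacc : SatisfiesCaccioppoli c₁ Ω (fun x => Vm p (g x)) W) (hR : 0 < R)
    (hsub : cube z (4 * R) ⊆ Ω) (hω₀ : 0 ≤ ω) (hω : ∀ x ∈ cube z R, ‖u x - b‖ ≤ ω)
    (hη : IsCutoff (L / R) η) (hηz : tsupport η ⊆ cube z R) (hS : MeasurableSet S)
    (hηS : ∀ x ∈ S, η x = 1) :
    ∫⁻ x in S, ENNReal.ofReal (‖g x‖ ^ (p + 2)) ≤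
      ENNReal.ofReal (2 * (ω / R) ^ 2 * (49 * d * c₁ + 4 * d ^ 2 * L ^ 2) *
        ∫ x in cube z (4 * R), ‖g x‖ ^ p) := by
  have hp₀ : 0 < p := by linarith
  have hp₁ : 1 ≤ ENNReal.ofReal p := ENNReal.one_le_ofReal.2 hp
  have hs : 1 + 2 / p ∈ Ioc (0 : ℝ) 3 :=
    ⟨by positivity, by linarith [div_le_self zero_le_two hp]⟩
  have h_cube : cube z R ⊆ cube z (4 * R) := cube_mono z (by linarith)
  have h_restrict := Measure.restrict_mono (h_cube.trans hsub) (le_refl (volume : Measure (Ed d)))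
  have hV := memLp_two_Vm hp₀ (hg.mono_measure (Measure.restrict_mono hsub le_rfl))
  have h_energy := (h.mono (h_cube.trans hsub)).setLIntegral_rpow_le
    (hVW.mono (h_cube.trans hsub)) (isOpen_cube z R)
    (locallyIntegrableOn_of_locallyIntegrable_restrict
      ((hu.mono_measure h_restrict).locallyIntegrable hp₁))
    (locallyIntegrableOn_of_locallyIntegrable_restrict
      ((hg.mono_measure h_restrict).locallyIntegrable hp₁))
    (hV.mono_measure (Measure.restrict_mono h_cube le_rfl)) (hcacc z R hR hsub).1
    (fun x => inner_Vm hp₀ (g x)) hω₀ hω hs hη hηz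
  have hV_int : ∫ x in cube z R, ‖Vm p (g x)‖ ^ 2 ≤ ∫ x in cube z (4 * R), ‖Vm p (g x)‖ ^ 2 :=
    setIntegral_mono_set ((memLp_two_iff_integrable_sq_norm hV.1).1 hV)
      (Eventually.of_forall fun x => by positivity) h_cube.eventuallyLE
  have hW_int := hcacc.setIntegral_norm_sq_le hc₁ hR hsub hV
  refine ((setLIntegral_norm_rpow_le_of_eq_one hp₀ hS hηS).trans h_energy).trans
    (ENNReal.ofReal_le_ofReal ?_)
  simp_rw [norm_Vm_sq hp₀] at hV_int hW_int ⊢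
  calc 2 * ω ^ 2 * (49 * d * (∫ x in cube z R, ‖W x‖ ^ 2) +
        4 * d ^ 2 * (L / R) ^ 2 * ∫ x in cube z R, ‖g x‖ ^ p)
      ≤ 2 * ω ^ 2 * (49 * d * (c₁ / R ^ 2 * ∫ x in cube z (4 * R), ‖g x‖ ^ p) +
        4 * d ^ 2 * (L / R) ^ 2 * ∫ x in cube z (4 * R), ‖g x‖ ^ p) := by gcongr
    _ = 2 * (ω / R) ^ 2 * (49 * d * c₁ + 4 * d ^ 2 * L ^ 2) *
        ∫ x in cube z (4 * R), ‖g x‖ ^ p := by field_simp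

lemma IsWeakGrad.setLIntegral_closedBall_norm_rpow_le (h : IsWeakGrad Ω u g)
    (hVW : IsWeakGrad Ω (fun x => Vm p (g x)) W) (hp : 1 ≤ p)
    (hu : MemLp u (ENNReal.ofReal p) (volume.restrict Ω))
    (hg : MemLp g (ENNReal.ofReal p) (volume.restrict Ω)) (hc₁ : 0 ≤ c₁) (hc₂ : 0 ≤ c₂)
    (hcacc : SatisfiesCaccioppoli c₁ Ω (fun x => Vm p (g x)) W)
    (hosc : SatisfiesOscillationBound p c₂ Ω u g) (hR : 0 < R) (hsub : cube cq (2 * R) ⊆ Ω)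
    (hz : z ∈ cube cq R) (hη : IsCutoff (L / (R / 32)) η)
    (hηz : tsupport η ⊆ closedBall z (2 * (R / 32))) (hη₁ : ∀ x ∈ closedBall z (R / 32), η x = 1) :
    ∫⁻ x in closedBall z (R / 32), ENNReal.ofReal (‖g x‖ ^ (p + 2)) ≤
      ENNReal.ofReal (2 * (c₂ * 4 ^ d) ^ 2 * (49 * d * c₁ + 4 * d ^ 2 * (8 * L) ^ 2) *
        (lpMean p g (cube cq (2 * R)) + 1) ^ 2 * ∫ x in cube cq (2 * R), ‖g x‖ ^ p) := by
  have hg_int := integrable_norm_rpow_of_memLp_ofReal (by linarith)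
    (hg.mono_measure (Measure.restrict_mono hsub le_rfl))
  have h_mean := lpMean_nonneg p g (cube cq (2 * R))
  have h_cube : cube z (4 * (R / 4)) ⊆ cube cq (2 * R) :=
    (cube_subset_cube_add hz _).trans (cube_mono cq (by linarith))
  have hη' : IsCutoff (8 * L / (R / 4)) η := by
    convert hη using 1
    ring
  refine (h.setLIntegral_norm_rpow_le_of_isCutoff hVW hp hu hg hc₁ hcacc (by positivity)
    (h_cube.trans hsub) (by positivity) (hosc.norm_sub_le hp hc₂ hR hsub hg_int hz) hη'
    (hηz.trans (closedBall_subset_cube z (by linarith))) isClosed_closedBall.measurableSet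
    hη₁).trans (ENNReal.ofReal_le_ofReal ?_)
  have h_int : ∫ x in cube z (4 * (R / 4)), ‖g x‖ ^ p ≤ ∫ x in cube cq (2 * R), ‖g x‖ ^ p :=
    setIntegral_mono_set hg_int (Eventually.of_forall fun x => by positivity) h_cube.eventuallyLE
  have h_ratio : c₂ * (R / 4) * (4 ^ d * (lpMean p g (cube cq (2 * R)) + 1)) / (R / 4) =
      c₂ * 4 ^ d * (lpMean p g (cube cq (2 * R)) + 1) := by field_simp
  rw [h_ratio, mul_pow (c₂ * 4 ^ d), ← mul_assoc, mul_right_comm (2 * (c₂ * 4 ^ d) ^ 2)]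
  gcongr

lemma IsWeakGrad.setLIntegral_cube_norm_rpow_le {κ : Type*} {t : Finset κ} {ζ : κ → Ed d}
    (h : IsWeakGrad Ω u g) (hVW : IsWeakGrad Ω (fun x => Vm p (g x)) W) (hp : 1 ≤ p)
    (hu : MemLp u (ENNReal.ofReal p) (volume.restrict Ω))
    (hg : MemLp g (ENNReal.ofReal p) (volume.restrict Ω)) (hc₁ : 0 ≤ c₁) (hc₂ : 0 ≤ c₂)
    (hcacc : SatisfiesCaccioppoli c₁ Ω (fun x => Vm p (g x)) W)
    (hosc : SatisfiesOscillationBound p c₂ Ω u g) (hR : 0 < R) (hsub : cube cq (2 * R) ⊆ Ω)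
    (hcut : ∀ z : Ed d, ∃ η : Ed d → ℝ, IsCutoff (L / (R / 32)) η ∧
      tsupport η ⊆ closedBall z (2 * (R / 32)) ∧ ∀ x ∈ closedBall z (R / 32), η x = 1)
    (hζ : ∀ i ∈ t, ζ i ∈ cube cq R) (hcover : cube cq R ⊆ ⋃ i ∈ t, closedBall (ζ i) (R / 32)) :
    ∫⁻ x in cube cq R, ENNReal.ofReal (‖g x‖ ^ (p + 2)) ≤ ENNReal.ofReal (R ^ d *
      (t.card * 2 ^ d * (2 * (c₂ * 4 ^ d) ^ 2 * (49 * d * c₁ + 4 * d ^ 2 * (8 * L) ^ 2)) *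
        (lpMean p g (cube cq (2 * R)) + 1) ^ (p + 2))) := by
  set A := lpMean p g (cube cq (2 * R))
  set C := 2 * (c₂ * 4 ^ d) ^ 2 * (49 * d * c₁ + 4 * d ^ 2 * (8 * L) ^ 2)
  have hA : 0 ≤ A := lpMean_nonneg p g _
  have h_ball : ∀ i ∈ t, ∫⁻ x in closedBall (ζ i) (R / 32), ENNReal.ofReal (‖g x‖ ^ (p + 2)) ≤
      ENNReal.ofReal (C * (A + 1) ^ 2 * ∫ x in cube cq (2 * R), ‖g x‖ ^ p) := fun i hi =>
    have ⟨η, hη, hηz, hη₁⟩ := hcut (ζ i)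
    h.setLIntegral_closedBall_norm_rpow_le hVW hp hu hg hc₁ hc₂ hcacc hosc hR hsub (hζ i hi) hη
      hηz hη₁
  refine (setLIntegral_le_card_mul_of_subset_iUnion hcover h_ball).trans ?_
  rw [← ENNReal.ofReal_natCast, ← ENNReal.ofReal_mul (by positivity),
    setIntegral_cube_norm_rpow (by linarith) g cq (by positivity)]
  refine ENNReal.ofReal_le_ofReal ?_
  calc t.card * (C * (A + 1) ^ 2 * ((2 * R) ^ d * A ^ p))
      ≤ t.card * (C * (A + 1) ^ 2 * ((2 * R) ^ d * (A + 1) ^ p)) := by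
        gcongr
        linarith
    _ = R ^ d * (t.card * 2 ^ d * C * (A + 1) ^ (p + 2)) := by
        rw [Real.rpow_add (by positivity), Real.rpow_two, mul_pow]
        ring

theorem stmt6_general (d : ℕ) (p c₁ c₂ : ℝ) (hp : 1 ≤ p) (hc₁ : 0 ≤ c₁) (hc₂ : 0 ≤ c₂) :
    ∃ c : ℝ, 0 < c ∧
      ∀ (ι : Type) [Fintype ι] (Ω : Set (Ed d)) (u : Ed d → EuclideanSpace ℝ ι)
        (g : Ed d → EuclideanSpace ℝ (ι × Fin d))
        (W : Ed d → EuclideanSpace ℝ ((ι × Fin d) × Fin d)),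
        MemLp u (ENNReal.ofReal p) (volume.restrict Ω) →
        IsWeakGrad Ω u g →
        MemLp g (ENNReal.ofReal p) (volume.restrict Ω) →
        IsWeakGrad Ω (fun x => Vm p (g x)) W →
        SatisfiesCaccioppoli c₁ Ω (fun x => Vm p (g x)) W →
        SatisfiesOscillationBound p c₂ Ω u g →
      ∀ (cq : Ed d) (R : ℝ), 0 < R → cube cq (2 * R) ⊆ Ω →
        MemLp g (ENNReal.ofReal (p + 2)) (volume.restrict (cube cq R)) ∧
        lpMean (p + 2) g (cube cq R) ≤ c * (lpMean p g (cube cq (2 * R)) + 1) := by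
  obtain ⟨L, hcut⟩ := exists_isCutoff (Ed d)
  obtain ⟨t, ht, hcover⟩ := exists_finset_cube_subset_iUnion_closedBall d (ε := 1 / 32)
    (by norm_num)
  set K : ℝ := t.card * 2 ^ d * (2 * (c₂ * 4 ^ d) ^ 2 * (49 * d * c₁ + 4 * d ^ 2 * (8 * L) ^ 2))
  refine ⟨K ^ (1 / (p + 2)) + 1, by positivity, ?_⟩
  intro ι _ Ω u g W hu hug hg hVW hcacc hosc cq R hR hsub
  have hA := lpMean_nonneg p g (cube cq (2 * R))
  have hg_meas : AEStronglyMeasurable g (volume.restrict (cube cq R)) :=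
    hg.1.mono_measure (Measure.restrict_mono ((cube_mono cq (by linarith)).trans hsub) le_rfl)
  have h_bound := hug.setLIntegral_cube_norm_rpow_le hVW hp hu hg hc₁ hc₂ hcacc hosc hR hsub
    (fun z => hcut z (R / 32) (by positivity)) (fun z hz => add_smul_mem_cube hR (ht hz))
    (by simpa only [one_div_mul_eq_div] using hcover cq R hR)
  obtain ⟨hg_memLp, hg_mean⟩ := memLp_and_lpMean_le_of_setLIntegral_le (by linarith) hR
    (by positivity) (by positivity) hg_meas h_bound
  exact ⟨hg_memLp, hg_mean.trans (by gcongr; linarith)⟩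

end HigherIntegrability

/-- `L^{p+2}` interpolation estimate: under the Caccioppoli estimate for
`V(∇u)` and the interior Hölder estimate for `u`, one has
`(⨍_Q |∇u|^{p+2})^{1/(p+2)} ≤ c((⨍_{2Q}|∇u|^p)^{1/p} + 1)` whenever `2Q ⊆ Q₀`, with
`c = c(d,N,p,α,c₁,c₂)`. -/
theorem stmt6 (d N : ℕ) (p α c₁ c₂ : ℝ) (hp : 1 < p) (hα : α ∈ Set.Ioo (0 : ℝ) 1)
    (hc₁ : 0 < c₁) (hc₂ : 0 < c₂) :
    ∃ c : ℝ, 0 < c ∧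
      ∀ (c₀ : Ed d) (R₀ : ℝ), 0 < R₀ →
      ∀ (u v : Ed d → En N) (g : Ed d → Mat N d)
        (W : Ed d → EuclideanSpace ℝ ((Fin N × Fin d) × Fin d)),
        -- `u ∈ W^{1,p}(Q₀;ℝ^N)` with weak gradient `g`
        MemLp u (ENNReal.ofReal p) (volume.restrict (cube c₀ R₀)) →
        IsWeakGrad (cube c₀ R₀) u g →
        MemLp g (ENNReal.ofReal p) (volume.restrict (cube c₀ R₀)) →
        -- (i) `V(∇u) ∈ W^{1,2}_loc(Q₀)` with the Caccioppoli estimate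
        IsWeakGrad (cube c₀ R₀) (fun x => Vm p (g x)) W →
        (∀ (cq : Ed d) (R : ℝ), 0 < R → cube cq (4 * R) ⊆ cube c₀ R₀ →
          MemLp W 2 (volume.restrict (cube cq R)) ∧
          ∫⁻ x in cube cq R, (‖W x‖₊ : ℝ≥0∞) ^ 2 ≤
            ENNReal.ofReal (c₁ / R ^ 2) *
              ∫⁻ x in cube cq (4 * R), (‖Vm p (g x)‖₊ : ℝ≥0∞) ^ 2) →
        -- (ii) `v` is a continuous representative satisfying the Hölder estimate
        ContinuousOn v (cube c₀ R₀) →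
        u =ᵐ[volume.restrict (cube c₀ R₀)] v →
        (∀ (cq : Ed d) (R : ℝ), 0 < R → cube cq (3 * R) ⊆ cube c₀ R₀ →
          ∀ x ∈ cube cq R, ∀ y ∈ cube cq R,
            ‖v x - v y‖ ≤
              c₂ * R ^ (1 - α) * ((⨍ z in cube cq (2 * R), ‖g z‖ ^ p) ^ (1 / p) + 1) *
                dist x y ^ α) →
      ∀ (cq : Ed d) (R : ℝ), 0 < R → cube cq (2 * R) ⊆ cube c₀ R₀ →
        MemLp g (ENNReal.ofReal (p + 2)) (volume.restrict (cube cq R)) ∧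
        (⨍ x in cube cq R, ‖g x‖ ^ (p + 2)) ^ (1 / (p + 2)) ≤
          c * ((⨍ x in cube cq (2 * R), ‖g x‖ ^ p) ^ (1 / p) + 1) := by
  obtain ⟨c, hc, h⟩ := stmt6_general d p c₁ (c₂ * (d + 1)) hp.le hc₁.le (by positivity)
  refine ⟨c, hc, fun c₀ R₀ _ u v g W hu hug hg hVW hcacc _ huv hholder => ?_⟩
  exact h (Fin N) (cube c₀ R₀) v g W (hu.ae_eq huv) (hug.congr_ae huv) hg hVW hcacc
    (satisfiesOscillationBound_of_holder hα hc₂.le hholder)
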